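/- arXiv:math/0403291 — 2 statements merged into one kernel-verified Lean document; each statement's English description precedes it below -/
import Mathlib

section
/- Let R be a Prüfer v-multiplication domain. Then the following statements are equivalent: (1) for each set Λ of pairwise incomparable t-primes of R, Φ(Λ) is v-finite; (2) if Λ ⊆ t-Max(R), then Φ(Λ) is v-finite; (3) each t-prime ideal P of R contains a finitely generated ideal which is not contained in any maximal t-ideal of R not containing P; (4) for each t-prime P of R there exists an element u ∈ K such that (R :_R u) ⊆ P and (R :_R u) ⊄ M for each maximal t-ideal M not containing P; (5) for each t-prime ideal P of R, R_P does not contain ⋂ R_M, where M ranges over the set of maximal t-ideals not containing P; (6) each t-linked overring of R is a t#-domain; (7) each t-flat overring of R is a t#-domain; (8) (P : P) = {x ∈ K : xP ⊆ P} is a t#-domain for each t-prime P of R. -/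
/-!
The link between the conditions is the element-ideal dictionary `(R :_R u) ⊆ P ↔ u ∉ R_P`
(`colonIdeal_le_iff`), together with the fact that over a PVMD everything is valuative at `t`-primes:
finitely generated ideals are locally principal there, and two `t`-primes inside a common maximal
`t`-ideal are comparable (`ValAt.exists_local_gen`, `IsPVMD.le_total`). Closures and localizations are
handled through divisibility in the base ring (`mem_vIdeal`, `ValAt`).

*The conditions on `R` itself.* `v`-finiteness of `Φ(Λ)`, for `Λ` the set of maximal `t`-ideals not
containing `P`, applied to `P`, yields the finitely generated `J ⊆ P`. Conversely, given such ideals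
`J` for all `t`-primes, suppose that `I ∈ Φ(Λ)` contains no `v`-finite member of `Φ(Λ)`. A Krull-type
separation lemma (`exists_tPrime_avoiding`) enlarges `I` to a `t`-prime `Q` with the same property, and
comparability shows that only one member `P` of `Λ` can contain the ideal `J ⊆ Q` attached to `Q`;
then `Q ⊆ P`, which is absurd. If `a` generates `J` locally at `P`, say `s J ⊆ a R` with `s ∉ P`, then
`u = s / a` satisfies `J ⊆ (R :_R u) ⊆ P`. In the other direction `(R :_R u)` contains a finitely
generated ideal lying in the same maximal `t`-ideals (`exists_fg_le_colonIdeal`), because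
`(R :_R u) + (R :_R u⁻¹)` lies in no maximal `t`-ideal.

*The conditions on overrings.* Every `t`-flat overring is `t`-linked, and over a PVMD the converse
holds: a maximal `t`-ideal `N` of a `t`-linked `T` contracts to a `t`-prime, and `T_N = R_{N ∩ R}`
(`isTFlat_of_isTLinked`). The element `u` attached to `N ∩ R` then lies in every `T_{N'}` with
`N' ≠ N` but not in `T_N`, so `T` is a `t#`-domain (`isTSharp_of_isTLinked`). In particular this
applies to `(P : P)`, which is `t`-linked. Finally, suppose that `R_P` contains the intersection of the
`R_M` with `P ⊄ M`. That intersection is then `(P : P)` (`iInter_subset_colonPP`); each such `M` is the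
contraction of a maximal `t`-ideal of `(P : P)`, and some maximal `t`-ideal of `(P : P)` lies over `P`
(`exists_tMax_comap_ge`). The latter can be dropped without changing the intersection of the
localizations, so `(P : P)` is not a `t#`-domain (`not_subset_of_isTSharp_colonPP`).
-/

/-
Definitions following S. Gabelli, E. Houston, T. G. Lucas,
"The t#-property for integral domains".

All the star-operation notions (`v`, `t`, maximal `t`-ideals, etc.) are defined for a
commutative ring `R` via its total quotient field `FractionRing R`; in all theorems `R`
is assumed to be an integral domain, so `FractionRing R` is its quotient field `K`.
-/

noncomputable section

namespace TSharpPaper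

variable (R : Type*) [CommRing R]

/-- The image of an integral ideal in the quotient field, as an `R`-submodule. -/
def idealSub (I : Ideal R) : Submodule R (FractionRing R) :=
  Submodule.map (Algebra.linearMap R (FractionRing R)) I

/-- The divisorial closure `I_v = (I⁻¹)⁻¹` of an integral ideal, as an integral ideal.
Here for a submodule `J` of `K`, `1 / J = {x ∈ K : xJ ⊆ R}` is `J⁻¹`. -/
def vIdeal (I : Ideal R) : Ideal R :=
  Submodule.comap (Algebra.linearMap R (FractionRing R))
    ((1 : Submodule R (FractionRing R)) / (1 / idealSub R I))

/-- The `t`-closure `I_t = ⋃ J_v`, the union over all nonzero finitely generated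
subideals `J` of `I`. -/
def tIdeal (I : Ideal R) : Ideal R :=
  ⨆ (J : Ideal R) (_ : J.FG) (_ : J ≠ ⊥) (_ : J ≤ I), vIdeal R J

/-- A (nonzero) integral ideal is divisorial if `I = I_v`. -/
def IsDivisorialIdeal (I : Ideal R) : Prop := I ≠ ⊥ ∧ vIdeal R I = I

/-- A (nonzero) integral ideal is a `t`-ideal if `I = I_t`. -/
def IsTIdeal (I : Ideal R) : Prop := I ≠ ⊥ ∧ tIdeal R I = I

/-- A `t`-prime is a prime `t`-ideal. -/
def IsTPrime (P : Ideal R) : Prop := P.IsPrime ∧ IsTIdeal R P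

/-- The set `t-Max(R)` of maximal `t`-ideals: integral ideals maximal among proper
integral `t`-ideals. -/
def tMax : Set (Ideal R) :=
  {M | IsTIdeal R M ∧ M ≠ ⊤ ∧ ∀ J : Ideal R, IsTIdeal R J → J ≠ ⊤ → M ≤ J → J = M}

/-- The localization `R_P` of `R` at (the complement of) a prime `P`, viewed as a subset
of the quotient field. -/
def locSet (P : Ideal R) : Set (FractionRing R) :=
  {x | ∃ r s : R, s ∉ P ∧ x * algebraMap R (FractionRing R) s = algebraMap R (FractionRing R) r}

/-- The image of `R` in its quotient field. -/
def imageR : Set (FractionRing R) := Set.range (algebraMap R (FractionRing R))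

/-- `R` is a `t#`-domain if `⋂_{M ∈ 𝔐₁} R_M ≠ ⋂_{M ∈ 𝔐₂} R_M` for any two distinct
subsets `𝔐₁, 𝔐₂` of `t-Max(R)`. -/
def IsTSharp : Prop :=
  ∀ 𝔐₁ 𝔐₂ : Set (Ideal R), 𝔐₁ ⊆ tMax R → 𝔐₂ ⊆ tMax R → 𝔐₁ ≠ 𝔐₂ →
    (⋂ M ∈ 𝔐₁, locSet R M) ≠ ⋂ M ∈ 𝔐₂, locSet R M

/-- The conductor `(R :_R u) = {r ∈ R : r·u ∈ R}` of an element `u` of the quotient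
field. -/
def colonIdeal (u : FractionRing R) : Ideal R :=
  Submodule.comap (Algebra.linearMap R (FractionRing R))
    (Submodule.comap (LinearMap.mulLeft R u) (1 : Submodule R (FractionRing R)))

/-- `R` is `v`-coherent if for each nonzero finitely generated ideal `I` of `R`,
`I⁻¹ = J_v` for some finitely generated fractional ideal `J`. -/
def IsVCoherent : Prop :=
  ∀ I : Ideal R, I ≠ ⊥ → I.FG →
    ∃ J : Submodule R (FractionRing R), J.FG ∧
      (1 : Submodule R (FractionRing R)) / idealSub R I = 1 / (1 / J)

/-- An ideal is `v`-finite if it equals `J_v` for some finitely generated ideal `J`. -/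
def IsVFinite (I : Ideal R) : Prop := ∃ J : Ideal R, J.FG ∧ I = vIdeal R J

/-- `Φ(Λ)`: the set of all integral `t`-ideals `I` of `R` with `I ⊄ P` for every
`P ∈ Λ`. -/
def Phi (Λ : Set (Ideal R)) : Set (Ideal R) :=
  {I | IsTIdeal R I ∧ ∀ P ∈ Λ, ¬ I ≤ P}

/-- `Φ(Λ)` is `v`-finite if every `t`-ideal in `Φ(Λ)` contains a `v`-finite `t`-ideal
belonging to `Φ(Λ)`. -/
def PhiVFinite (Λ : Set (Ideal R)) : Prop :=
  ∀ I ∈ Phi R Λ, ∃ J ∈ Phi R Λ, J ≤ I ∧ IsVFinite R J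

/-- The generalized ring of quotients `R_{Φ(Λ)} = {x ∈ K : xI ⊆ R for some I ∈ Φ(Λ)}`. -/
def RPhi (Λ : Set (Ideal R)) : Set (FractionRing R) :=
  {x | ∃ I ∈ Phi R Λ, ∀ a ∈ I, x * algebraMap R (FractionRing R) a ∈ imageR R}

/-- `Λ` is a set of pairwise incomparable `t`-primes of `R`. -/
def IncompTPrimes (Λ : Set (Ideal R)) : Prop :=
  (∀ P ∈ Λ, IsTPrime R P) ∧ ∀ P ∈ Λ, ∀ Q ∈ Λ, P ≤ Q → P = Q

/-- `R` is a Prüfer `v`-multiplication domain if `R_M` is a valuation domain for every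
maximal `t`-ideal `M` of `R`. -/
def IsPVMD [IsDomain R] : Prop :=
  ∀ M ∈ tMax R, ∀ x : FractionRing R, x ≠ 0 → x ∈ locSet R M ∨ x⁻¹ ∈ locSet R M

/-- `R` is a Mori domain: the ascending chain condition holds on integral divisorial
ideals. -/
def IsMori : Prop :=
  ∀ f : ℕ → Ideal R, (∀ n, IsDivisorialIdeal R (f n)) → (∀ n, f n ≤ f (n + 1)) →
    ∃ n, ∀ m, n ≤ m → f m = f n

/-- The localization `T_Q` of a subring `T` of the quotient field of `R` at (the
complement of) an ideal `Q` of `T`, viewed as a subset of the quotient field of `R`. -/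
def locSetSub (T : Subring (FractionRing R)) (Q : Ideal T) : Set (FractionRing R) :=
  {x | ∃ r s : T, s ∉ Q ∧ x * (s : FractionRing R) = (r : FractionRing R)}

/-- `T` is an overring of `R`: a subring of the quotient field containing (the image
of) `R`. -/
def IsOverring (T : Subring (FractionRing R)) : Prop :=
  ∀ r : R, algebraMap R (FractionRing R) r ∈ T

/-- The canonical ring homomorphism from `R` to an overring `T`; `M ∩ R` is the
contraction `Ideal.comap (intoOverring R T h) M`. -/
def intoOverring (T : Subring (FractionRing R)) (h : IsOverring R T) : R →+* T :=
  (algebraMap R (FractionRing R)).codRestrict T h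

/-- `T` is a `t`-flat overring of `R`: `T_M = R_{M ∩ R}` for each maximal `t`-ideal `M`
of `T`. -/
def IsTFlat (T : Subring (FractionRing R)) : Prop :=
  ∃ h : IsOverring R T, ∀ M ∈ tMax (↥T),
    locSetSub R T M = locSet R (Ideal.comap (intoOverring R T h) M)

/-- `T` is `t`-linked over `R`: for each nonzero finitely generated ideal `I` of `R` with
`(R : I) = R` one has `(T : IT) = T`. -/
def IsTLinked (T : Subring (FractionRing R)) : Prop :=
  ∀ I : Ideal R, I ≠ ⊥ → I.FG →
    (1 : Submodule R (FractionRing R)) / idealSub R I = 1 →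
    {x : FractionRing R | ∀ a ∈ I, x * algebraMap R (FractionRing R) a ∈ T} =
      (T : Set (FractionRing R))

/-- `T` is a `t`-subintersection of `R`: `T = ⋂_{P ∈ Λ} R_P` for some set `Λ` of
`t`-primes of `R`. -/
def IsTSubintersection (T : Subring (FractionRing R)) : Prop :=
  ∃ Λ : Set (Ideal R), (∀ P ∈ Λ, IsTPrime R P) ∧
    (T : Set (FractionRing R)) = ⋂ P ∈ Λ, locSet R P

/-- `(P : P) = {x ∈ K : xP ⊆ P}`, as a subring of the quotient field of `R`. -/
def colonPP (P : Ideal R) : Subring (FractionRing R) where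
  carrier := {x | ∀ a ∈ P, x * algebraMap R (FractionRing R) a ∈ idealSub R P}
  one_mem' := by
    intro a ha
    rw [one_mul]
    exact Submodule.mem_map_of_mem ha
  mul_mem' := by
    intro x y hx hy a ha
    rcases hy a ha with ⟨b, hb, hby⟩
    rw [mul_assoc, ← hby]
    exact hx b hb
  add_mem' := by
    intro x y hx hy a ha
    rw [add_mul]
    exact Submodule.add_mem _ (hx a ha) (hy a ha)
  zero_mem' := by
    intro a ha
    rw [zero_mul]
    exact Submodule.zero_mem _
  neg_mem' := by
    intro x hx a ha
    rw [neg_mul]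
    exact Submodule.neg_mem _ (hx a ha)

/-- `R` is a `t#_P`-domain: for sets `Λ₁ ≠ Λ₂` of `t`-primes such that `(P + Q)_t = R`
for distinct `P ∈ Λ₁`, `Q ∈ Λ₂`, one has `R_{Φ(Λ₁)} ≠ R_{Φ(Λ₂)}`. -/
def IsTSharpP : Prop :=
  ∀ Λ₁ Λ₂ : Set (Ideal R), (∀ P ∈ Λ₁, IsTPrime R P) → (∀ Q ∈ Λ₂, IsTPrime R Q) →
    (∀ P ∈ Λ₁, ∀ Q ∈ Λ₂, P ≠ Q → tIdeal R (P ⊔ Q) = ⊤) →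
    Λ₁ ≠ Λ₂ → RPhi R Λ₁ ≠ RPhi R Λ₂

/-- A `t`-localizing system of ideals of `R`: a set of integral `t`-ideals closed under
`t`-multiplication and satisfying the two localizing-system closure properties. -/
def IsTLocalizingSystem (Φ : Set (Ideal R)) : Prop :=
  (∀ I ∈ Φ, IsTIdeal R I) ∧
  (∀ I ∈ Φ, ∀ J ∈ Φ, tIdeal R (I * J) ∈ Φ) ∧
  (∀ I ∈ Φ, ∀ J : Ideal R, IsTIdeal R J → I ≤ J → J ∈ Φ) ∧
  (∀ I ∈ Φ, ∀ J : Ideal R, IsTIdeal R J →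
    (∀ a ∈ I, tIdeal R (Submodule.colon J (Ideal.span {a})) ∈ Φ) → J ∈ Φ)

/-- The ascending chain condition on `t`-primes of `R`. -/
def ACCTPrimes : Prop :=
  ∀ f : ℕ → Ideal R, (∀ n, IsTPrime R (f n)) → (∀ n, f n ≤ f (n + 1)) →
    ∃ n, ∀ m, n ≤ m → f m = f n

/-- The ascending chain condition on radical `t`-ideals of `R`. -/
def ACCRadicalTIdeals : Prop :=
  ∀ f : ℕ → Ideal R, (∀ n, IsTIdeal R (f n) ∧ (f n).radical = f n) →
    (∀ n, f n ≤ f (n + 1)) → ∃ n, ∀ m, n ≤ m → f m = f n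

/-- A prime `P` is branched if there is a `PR_P`-primary ideal of `R_P` different from
`PR_P` (the maximal ideal of `R_P`). -/
def IsBranched (P : Ideal R) (hP : P.IsPrime) : Prop :=
  letI := hP
  ∃ Q : Ideal (Localization.AtPrime P), Q.IsPrimary ∧
    Q ≠ IsLocalRing.maximalIdeal (Localization.AtPrime P)

/-- A prime ideal of a domain has height one. -/
def HeightOne (Q : Ideal R) : Prop :=
  Q ≠ ⊥ ∧ ∀ P : Ideal R, P.IsPrime → P < Q → P = ⊥

/-- A nonzero integral ideal `I` is `t`-invertible: `(I I⁻¹)_t = R`. -/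
def IsTInvertible (I : Ideal R) : Prop :=
  tIdeal R (Submodule.comap (Algebra.linearMap R (FractionRing R))
    (idealSub R I * ((1 : Submodule R (FractionRing R)) / idealSub R I))) = ⊤

variable {σ : Type*}

/-- An upper to zero: a prime ideal `Q` of `R[{X_α}]` with `Q ∩ R = 0`. -/
def IsUpperToZero (Q : Ideal (MvPolynomial σ R)) : Prop :=
  Q.IsPrime ∧ Ideal.comap (MvPolynomial.C : R →+* MvPolynomial σ R) Q = ⊥

/-- The content `c(f)` of a polynomial: the ideal of `R` generated by its
coefficients. -/
def mvContent (f : MvPolynomial σ R) : Ideal R :=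
  Ideal.span (Set.range fun m => MvPolynomial.coeff m f)

/-- The content `c(I)` of an ideal of `R[{X_α}]`: the ideal of `R` generated by the
coefficients of all polynomials in `I`. -/
def mvContentIdeal (Q : Ideal (MvPolynomial σ R)) : Ideal R :=
  Ideal.span {r | ∃ f ∈ Q, ∃ m, MvPolynomial.coeff m f = r}

/-- `R({X_α})`: the localization of `R[{X_α}]` at the (multiplicatively closed) set of
polynomials of unit content. -/
def mvNagata (σ : Type*) : Type _ :=
  Localization (Submonoid.closure {f : MvPolynomial σ R | mvContent R f = ⊤})

instance (σ : Type*) : CommRing (mvNagata R σ) := by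
  unfold mvNagata; infer_instance

/-- `R⟨{X_α}⟩`: the localization of `R[{X_α}]` at the (multiplicatively closed) set
`S = {f : c(f)_v = R}`. -/
def mvKronecker (σ : Type*) : Type _ :=
  Localization (Submonoid.closure {f : MvPolynomial σ R | vIdeal R (mvContent R f) = ⊤})

instance (σ : Type*) : CommRing (mvKronecker R σ) := by
  unfold mvKronecker; infer_instance

/-! ### `t`-ideals and maximal `t`-ideals -/

section General

variable {D : Type*} [CommRing D] [IsDomain D]

/-- Fraction-free description of the `v`-closure: with `a / b` running over `J⁻¹`, the condition
`x J⁻¹ ⊆ D` becomes a divisibility condition. -/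
theorem mem_vIdeal {J : Ideal D} {x : D} :
    x ∈ vIdeal D J ↔ ∀ a b : D, b ≠ 0 → (∀ j ∈ J, b ∣ a * j) → b ∣ a * x := by
  have hinj := IsFractionRing.injective D (FractionRing D)
  unfold vIdeal idealSub
  rw [Submodule.mem_comap, Submodule.mem_div_iff_forall_mul_mem]
  constructor
  · intro h a b hb hJ
    have hb' : algebraMap D (FractionRing D) b ≠ 0 := by
      simpa using hb
    obtain ⟨r, hr⟩ := Submodule.mem_one.1 (h (algebraMap D _ a / algebraMap D _ b) (by
      rw [Submodule.mem_div_iff_forall_mul_mem]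
      rintro _ ⟨j, hj, rfl⟩
      obtain ⟨c, hc⟩ := hJ j hj
      refine Submodule.mem_one.2 ⟨c, ?_⟩
      rw [Algebra.linearMap_apply, div_mul_eq_mul_div, eq_div_iff hb', ← map_mul, ← map_mul, hc,
        mul_comm]))
    refine ⟨r, hinj ?_⟩
    rw [Algebra.linearMap_apply, mul_div_assoc', eq_div_iff hb'] at hr
    rw [map_mul, map_mul, mul_comm, ← hr, mul_comm]
  · intro h y hy
    obtain ⟨a, b, hb, rfl⟩ := IsFractionRing.div_surjective (A := D) y
    have hb0 : b ≠ 0 := nonZeroDivisors.ne_zero hb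
    have hb' : algebraMap D (FractionRing D) b ≠ 0 := by
      simpa using hb0
    obtain ⟨c, hc⟩ := h a b hb0 (fun _ hj => by
      obtain ⟨r, hr⟩ := Submodule.mem_one.1
        (Submodule.mem_div_iff_forall_mul_mem.1 hy _ (Submodule.mem_map_of_mem hj))
      refine ⟨r, hinj ?_⟩
      rw [Algebra.linearMap_apply, div_mul_eq_mul_div, eq_div_iff hb'] at hr
      rw [map_mul, map_mul, mul_comm (algebraMap D _ b), hr])
    refine Submodule.mem_one.2 ⟨c, ?_⟩
    rw [Algebra.linearMap_apply, mul_div_assoc', eq_div_iff hb', ← map_mul, ← map_mul,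
      mul_comm x, hc, mul_comm]

theorem le_vIdeal (J : Ideal D) : J ≤ vIdeal D J :=
  fun x hx => mem_vIdeal.2 fun _ _ _ h => h x hx

theorem vIdeal_le_of_le_vIdeal {J H : Ideal D} (h : J ≤ vIdeal D H) :
    vIdeal D J ≤ vIdeal D H :=
  fun _ hx => mem_vIdeal.2 fun a b hb hH =>
    mem_vIdeal.1 hx a b hb fun _ hj => mem_vIdeal.1 (h hj) a b hb hH

theorem vIdeal_mono {J H : Ideal D} (h : J ≤ H) : vIdeal D J ≤ vIdeal D H :=
  vIdeal_le_of_le_vIdeal (h.trans (le_vIdeal H))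

theorem mem_tIdeal {I : Ideal D} (hI : I ≠ ⊥) {x : D} :
    x ∈ tIdeal D I ↔ ∃ J : Ideal D, J.FG ∧ J ≠ ⊥ ∧ J ≤ I ∧ x ∈ vIdeal D J := by
  have key : tIdeal D I = ⨆ J : {J : Ideal D // J.FG ∧ J ≠ ⊥ ∧ J ≤ I}, vIdeal D J.1 := by
    unfold tIdeal
    simp only [iSup_subtype, iSup_and]
  obtain ⟨y, hy, hy0⟩ := Submodule.exists_mem_ne_zero_of_ne_bot hI
  have : Nonempty {J : Ideal D // J.FG ∧ J ≠ ⊥ ∧ J ≤ I} :=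
    ⟨⟨Ideal.span {y}, Submodule.fg_span_singleton y, by simpa using hy0,
      (Ideal.span_singleton_le_iff_mem I).2 hy⟩⟩
  rw [key, Submodule.mem_iSup_of_directed]
  · constructor
    · rintro ⟨⟨J, h1, h2, h3⟩, h⟩
      exact ⟨J, h1, h2, h3, h⟩
    · rintro ⟨J, h1, h2, h3, h⟩
      exact ⟨⟨J, h1, h2, h3⟩, h⟩
  · rintro ⟨J, h1, h2, h3⟩ ⟨J', h1', h2', h3'⟩
    refine ⟨⟨J ⊔ J', Submodule.FG.sup h1 h1', ?_, sup_le h3 h3'⟩, vIdeal_mono le_sup_left,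
      vIdeal_mono le_sup_right⟩
    exact fun h => h2 (eq_bot_iff.2 (h ▸ le_sup_left))

theorem le_tIdeal {I : Ideal D} (hI : I ≠ ⊥) : I ≤ tIdeal D I := by
  intro x hx
  obtain ⟨y, hy, hy0⟩ := Submodule.exists_mem_ne_zero_of_ne_bot hI
  refine (mem_tIdeal hI).2 ⟨Ideal.span {x} ⊔ Ideal.span {y},
    (Submodule.fg_span_singleton x).sup (Submodule.fg_span_singleton y), ?_, ?_, ?_⟩
  · intro h
    rw [sup_eq_bot_iff] at h
    exact hy0 (by simpa using h.2)
  · exact sup_le ((Ideal.span_singleton_le_iff_mem I).2 hx)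
      ((Ideal.span_singleton_le_iff_mem I).2 hy)
  · exact le_vIdeal _ (Ideal.mem_sup_left (Ideal.mem_span_singleton_self x))

theorem isTIdeal_iff {I : Ideal D} :
    IsTIdeal D I ↔ I ≠ ⊥ ∧ ∀ J : Ideal D, J.FG → J ≠ ⊥ → J ≤ I → vIdeal D J ≤ I := by
  constructor
  · rintro ⟨h0, h⟩
    refine ⟨h0, fun J h1 h2 h3 x hx => ?_⟩
    rw [← h]
    exact (mem_tIdeal h0).2 ⟨J, h1, h2, h3, hx⟩
  · rintro ⟨h0, h⟩
    refine ⟨h0, le_antisymm (fun x hx => ?_) (le_tIdeal h0)⟩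
    obtain ⟨J, h1, h2, h3, h4⟩ := (mem_tIdeal h0).1 hx
    exact h J h1 h2 h3 h4

/-- A `t`-ideal absorbs `v`-closures of finitely generated subideals, the zero ideal included. -/
theorem IsTIdeal.vIdeal_le {I J : Ideal D} (h : IsTIdeal D I) (hJ : J.FG) (hJI : J ≤ I) :
    vIdeal D J ≤ I := by
  obtain ⟨y, hy, hy0⟩ := Submodule.exists_mem_ne_zero_of_ne_bot h.1
  refine (vIdeal_mono (le_sup_left (b := Ideal.span {y}))).trans
    ((isTIdeal_iff.1 h).2 _ (Submodule.FG.sup hJ (Submodule.fg_span_singleton y)) ?_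
      (sup_le hJI ((Ideal.span_singleton_le_iff_mem I).2 hy)))
  intro h
  rw [sup_eq_bot_iff] at h
  exact hy0 (by simpa using h.2)

/-- A finitely generated ideal inside a directed union of `v`-closures lies in one of them. -/
theorem exists_fg_of_le_tIdeal {I : Ideal D} (hI : I ≠ ⊥) {J : Ideal D} (hJ : J.FG)
    (h : J ≤ tIdeal D I) : ∃ H : Ideal D, H.FG ∧ H ≠ ⊥ ∧ H ≤ I ∧ J ≤ vIdeal D H := by
  induction J, hJ using Submodule.fg_induction with
  | singleton x =>
    obtain ⟨H, h1, h2, h3, h4⟩ := (mem_tIdeal hI).1 (h (Ideal.mem_span_singleton_self x))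
    exact ⟨H, h1, h2, h3, (Ideal.span_singleton_le_iff_mem _).2 h4⟩
  | sup J₁ J₂ _ _ ih₁ ih₂ =>
    obtain ⟨H, h1, h2, h3, h4⟩ := ih₁ (le_sup_left.trans h)
    obtain ⟨H', h1', h2', h3', h4'⟩ := ih₂ (le_sup_right.trans h)
    refine ⟨H ⊔ H', Submodule.FG.sup h1 h1', fun h => h2 (eq_bot_iff.2 (h ▸ le_sup_left)), sup_le h3 h3',
      sup_le (h4.trans (vIdeal_mono le_sup_left)) (h4'.trans (vIdeal_mono le_sup_right))⟩

theorem isTIdeal_tIdeal {I : Ideal D} (hI : I ≠ ⊥) : IsTIdeal D (tIdeal D I) := by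
  refine isTIdeal_iff.2 ⟨fun h => hI (eq_bot_iff.2 (h ▸ le_tIdeal hI)), ?_⟩
  intro J hJ _ hJI x hx
  obtain ⟨H, h1, h2, h3, h4⟩ := exists_fg_of_le_tIdeal hI hJ hJI
  exact (mem_tIdeal hI).2 ⟨H, h1, h2, h3, vIdeal_le_of_le_vIdeal h4 hx⟩

theorem isTIdeal_vIdeal {J : Ideal D} (hJ : J ≠ ⊥) : IsTIdeal D (vIdeal D J) :=
  isTIdeal_iff.2 ⟨fun h => hJ (eq_bot_iff.2 (h ▸ le_vIdeal J)),
    fun _ _ _ h => vIdeal_le_of_le_vIdeal h⟩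

/-- If `1 ∈ (J₁)_v` and `1 ∈ (J₂)_v`, then `1 ∈ (J₁ J₂)_v`. -/
theorem one_mem_vIdeal_mul {J₁ J₂ : Ideal D} (h₁ : (1 : D) ∈ vIdeal D J₁)
    (h₂ : (1 : D) ∈ vIdeal D J₂) : (1 : D) ∈ vIdeal D (J₁ * J₂) := by
  rw [mem_vIdeal] at *
  intro a b hb h
  refine h₁ a b hb fun j hj => ?_
  have := h₂ (a * j) b hb fun k hk => by
    simpa [mul_assoc] using h (j * k) (Ideal.mul_mem_mul hj hk)
  simpa using this

/-- A Krull-type separation lemma. Let `B` be a family of ideals containing the unit ideal, closed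
under products, and such that `H ∈ B` as soon as `J ⊆ H_v` for some `J ∈ B` (with `H` and `J`
finitely generated). A `t`-ideal containing no finitely generated member of `B` is contained in a
`t`-ideal maximal with that property, and such a maximal `t`-ideal is prime. -/
theorem exists_tPrime_avoiding (B : Set (Ideal D)) (htop : ⊤ ∈ B)
    (hmul : ∀ J₁ ∈ B, ∀ J₂ ∈ B, J₁ * J₂ ∈ B)
    (hv : ∀ J ∈ B, ∀ H : Ideal D, H.FG → J.FG → J ≤ vIdeal D H → H ∈ B)
    {I : Ideal D} (hI : IsTIdeal D I) (hIB : ∀ J ∈ B, J.FG → ¬ J ≤ I) :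
    ∃ Q : Ideal D, I ≤ Q ∧ IsTPrime D Q ∧ (∀ J ∈ B, J.FG → ¬ J ≤ Q) ∧
      ∀ Q' : Ideal D, IsTIdeal D Q' → (∀ J ∈ B, J.FG → ¬ J ≤ Q') → Q ≤ Q' → Q' = Q := by
  obtain ⟨Q, hIQ, hQ⟩ := zorn_le_nonempty₀
    {Q : Ideal D | IsTIdeal D Q ∧ ∀ J ∈ B, J.FG → ¬ J ≤ Q} (by
      intro c hc hchain y hy
      have hdir : DirectedOn (· ≤ ·) c := hchain.directedOn
      have hmem : ∀ J : Ideal D, J.FG → J ≤ sSup c → ∃ Q ∈ c, J ≤ Q := by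
        intro J hJ h
        induction J, hJ using Submodule.fg_induction with
        | singleton x =>
          obtain ⟨Q, hQ, hx⟩ := (Submodule.mem_sSup_of_directed ⟨y, hy⟩ hdir).1
            (h (Ideal.mem_span_singleton_self x))
          exact ⟨Q, hQ, (Ideal.span_singleton_le_iff_mem _).2 hx⟩
        | sup J₁ J₂ _ _ ih₁ ih₂ =>
          obtain ⟨Q, hQ, h1⟩ := ih₁ (le_sup_left.trans h)
          obtain ⟨Q', hQ', h2⟩ := ih₂ (le_sup_right.trans h)
          obtain ⟨Q'', hQ'', h3, h4⟩ := hdir Q hQ Q' hQ'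
          exact ⟨Q'', hQ'', sup_le (h1.trans h3) (h2.trans h4)⟩
      refine ⟨sSup c, ⟨isTIdeal_iff.2 ⟨?_, ?_⟩, ?_⟩, fun z hz => le_sSup hz⟩
      · exact fun h => (hc hy).1.1 (eq_bot_iff.2 (h ▸ le_sSup hy))
      · intro J hJ _ hle
        obtain ⟨Q, hQ, h⟩ := hmem J hJ hle
        exact ((hc hQ).1.vIdeal_le hJ h).trans (le_sSup hQ)
      · intro J hJB hJ hle
        obtain ⟨Q, hQ, h⟩ := hmem J hJ hle
        exact (hc hQ).2 J hJB hJ h) I ⟨hI, hIB⟩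
  have hQt : IsTIdeal D Q := hQ.prop.1
  have hQB := hQ.prop.2
  have hmax : ∀ Q' : Ideal D, IsTIdeal D Q' → (∀ J ∈ B, J.FG → ¬ J ≤ Q') → Q ≤ Q' → Q' = Q :=
    fun Q' h1 h2 h3 => le_antisymm (hQ.2 ⟨h1, h2⟩ h3) h3
  have hext : ∀ a ∉ Q, ∃ H ∈ B, H.FG ∧ H ≤ Q ⊔ Ideal.span {a} := by
    intro a ha
    have hne : Q ⊔ Ideal.span {a} ≠ ⊥ := fun h => hQt.1 (eq_bot_iff.2 (h ▸ le_sup_left))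
    by_contra hcon
    have := hmax (tIdeal D (Q ⊔ Ideal.span {a})) (isTIdeal_tIdeal hne) (by
      intro J hJB hJ hle
      obtain ⟨H, h1, h2, h3, h4⟩ := exists_fg_of_le_tIdeal hne hJ hle
      exact hcon ⟨H, hv J hJB H h1 hJ h4, h1, h3⟩) (le_sup_left.trans (le_tIdeal hne))
    exact ha (this ▸ le_tIdeal hne (Ideal.mem_sup_right (Ideal.mem_span_singleton_self a)))
  refine ⟨Q, hIQ, ⟨⟨fun h => hQB ⊤ htop ⟨{1}, by simp⟩ h.ge, ?_⟩, hQt⟩, hQB, hmax⟩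
  intro a b hab
  by_contra hcon
  rw [not_or] at hcon
  obtain ⟨H, hHB, hH, hle⟩ := hext a hcon.1
  obtain ⟨H', hHB', hH', hle'⟩ := hext b hcon.2
  refine hQB _ (hmul H hHB H' hHB') (hH.mul hH') ((Ideal.mul_mono hle hle').trans ?_)
  rw [Ideal.sup_mul, Ideal.mul_sup, Ideal.mul_sup, Ideal.span_singleton_mul_span_singleton]
  exact sup_le (sup_le Ideal.mul_le_left Ideal.mul_le_left)
    (sup_le Ideal.mul_le_right ((Ideal.span_singleton_le_iff_mem Q).2 hab))

/-- The separation lemma for the family of ideals `J` with `1 ∈ J_v`: proper `t`-ideals lie in maximal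
`t`-ideals, and these are prime. -/
theorem exists_tMax_prime {I : Ideal D} (hI : IsTIdeal D I) (hne : I ≠ ⊤) :
    ∃ M ∈ tMax D, I ≤ M ∧ M.IsPrime := by
  have hiff : ∀ Q : Ideal D, IsTIdeal D Q →
      (Q ≠ ⊤ ↔ ∀ J ∈ {J : Ideal D | (1 : D) ∈ vIdeal D J}, J.FG → ¬ J ≤ Q) := by
    intro Q hQ
    constructor
    · intro h J hJB hJ hle
      exact h ((Ideal.eq_top_iff_one Q).2 (hQ.vIdeal_le hJ hle hJB))
    · rintro h rfl
      exact h ⊤ (le_vIdeal ⊤ trivial) ⟨{1}, by simp⟩ le_rfl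
  obtain ⟨M, h1, h2, h3, h4⟩ := exists_tPrime_avoiding {J : Ideal D | (1 : D) ∈ vIdeal D J}
    (le_vIdeal ⊤ trivial) (fun _ h _ h' => one_mem_vIdeal_mul h h')
    (fun J hJ H _ _ hle => vIdeal_le_of_le_vIdeal hle hJ) hI ((hiff I hI).1 hne)
  exact ⟨M, ⟨h2.2, h2.1.ne_top, fun J hJ hJt hle => h4 J hJ ((hiff J hJ).1 hJt) hle⟩, h1, h2.1⟩

theorem isTPrime_of_mem_tMax {M : Ideal D} (hM : M ∈ tMax D) : IsTPrime D M := by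
  obtain ⟨N, hN, hle, hp⟩ := exists_tMax_prime hM.1 hM.2.1
  have := hM.2.2 N hN.1 hN.2.1 hle
  exact ⟨this ▸ hp, hM.1⟩

omit [IsDomain D] in
theorem tMax_eq_of_le {M N : Ideal D} (hM : M ∈ tMax D) (hN : N ∈ tMax D) (h : M ≤ N) : N = M :=
  hM.2.2 N hN.1 hN.2.1 h

theorem exists_tMax_of_tPrime {P : Ideal D} (hP : IsTPrime D P) : ∃ M ∈ tMax D, P ≤ M := by
  obtain ⟨M, hM, h, _⟩ := exists_tMax_prime hP.2 hP.1.ne_top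
  exact ⟨M, hM, h⟩

/-- Fraction-free form of `D = ⋂ D_M`, `M` ranging over the maximal `t`-ideals: the denominator
ideal of `a / b` is a `t`-ideal, hence proper only if it lies in some `M`. -/
theorem dvd_of_forall_tMax {a b : D} (hb : b ≠ 0) (h : ∀ M ∈ tMax D, ∃ s ∉ M, b ∣ a * s) :
    b ∣ a := by
  let C : Ideal D := Submodule.comap (LinearMap.mulLeft D a) (Ideal.span {b})
  have hC : ∀ s, s ∈ C ↔ b ∣ a * s := fun s => by
    simp [C, Ideal.mem_span_singleton]
  have hCt : IsTIdeal D C := by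
    refine isTIdeal_iff.2 ⟨?_, ?_⟩
    · intro h0
      have : b ∈ C := (hC b).2 (Dvd.intro_left a rfl)
      rw [h0] at this
      exact hb this
    · intro J _ _ hle x hx
      exact (hC x).2 (mem_vIdeal.1 hx a b hb fun j hj => (hC j).1 (hle hj))
  by_contra hab
  obtain ⟨M, hM, hle, _⟩ := exists_tMax_prime hCt (fun ht => hab (by
    simpa using (hC 1).1 (ht ▸ trivial)))
  obtain ⟨s, hs, hd⟩ := h M hM
  exact hs (hle ((hC s).2 hd))

end General

/-! ### Primes with valuative localization -/

section Valuation

variable {D : Type*} [CommRing D] [IsDomain D]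

/-- Fraction-free form of the statement that the localization at the prime `P` is a valuation
domain: of any two elements of `D`, one divides the other locally at `P`. -/
def ValAt (P : Ideal D) : Prop := ∀ a b : D, ∃ s ∉ P, a ∣ s * b ∨ b ∣ s * a

omit [IsDomain D] in
theorem ValAt.mono {P M : Ideal D} (h : ValAt M) (hle : P ≤ M) : ValAt P := fun a b =>
  let ⟨s, hs, hd⟩ := h a b
  ⟨s, fun hsP => hs (hle hsP), hd⟩

omit [IsDomain D] in
/-- Finitely generated ideals are locally principal at `P`, generated by one of their elements. -/
theorem ValAt.exists_local_gen {P : Ideal D} (h : ValAt P) (hP : P.IsPrime) {J : Ideal D}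
    (hJ : J.FG) : ∃ a ∈ J, ∃ s ∉ P, ∀ j ∈ J, a ∣ s * j := by
  induction J, hJ using Submodule.fg_induction with
  | singleton x =>
    refine ⟨x, Ideal.mem_span_singleton_self x, 1, fun h1 => hP.ne_top ?_, fun j hj => ?_⟩
    · exact (Ideal.eq_top_iff_one P).2 h1
    · rw [one_mul]
      exact Ideal.mem_span_singleton.1 hj
  | sup J₁ J₂ _ _ ih₁ ih₂ =>
    obtain ⟨a, ha, s, hs, H⟩ := ih₁
    obtain ⟨b, hb, t, ht, H'⟩ := ih₂
    obtain ⟨r, hr, hd⟩ := h a b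
    have hst : r * s * t ∉ P := fun hc =>
      (hP.mem_or_mem hc).elim (fun hc => (hP.mem_or_mem hc).elim hr hs) ht
    rcases hd with ⟨c, hd⟩ | ⟨c, hd⟩
    · refine ⟨a, Ideal.mem_sup_left ha, r * s * t, hst, fun j hj => ?_⟩
      obtain ⟨x, hx, y, hy, rfl⟩ := Submodule.mem_sup.1 hj
      obtain ⟨u, hu⟩ := H x hx
      obtain ⟨v, hv⟩ := H' y hy
      exact ⟨r * t * u + s * c * v, by linear_combination r * t * hu + r * s * hv + s * v * hd⟩
    · refine ⟨b, Ideal.mem_sup_right hb, r * s * t, hst, fun j hj => ?_⟩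
      obtain ⟨x, hx, y, hy, rfl⟩ := Submodule.mem_sup.1 hj
      obtain ⟨u, hu⟩ := H x hx
      obtain ⟨v, hv⟩ := H' y hy
      exact ⟨r * s * v + t * c * u, by linear_combination r * t * hu + r * s * hv + t * u * hd⟩

/-- A nonzero valuative prime is a `t`-prime: a finitely generated `J ⊆ P` is principal locally at
`P`, so passing to `J_v` does not leave `P`. -/
theorem ValAt.isTPrime {P : Ideal D} (h : ValAt P) (hP : P.IsPrime) (h0 : P ≠ ⊥) :
    IsTPrime D P := by
  refine ⟨hP, isTIdeal_iff.2 ⟨h0, fun J hJ hJ0 hle x hx => ?_⟩⟩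
  obtain ⟨a, ha, s, hs, H⟩ := h.exists_local_gen hP hJ
  have ha0 : a ≠ 0 := by
    rintro rfl
    refine hJ0 (eq_bot_iff.2 fun j hj => ?_)
    have h0 := zero_dvd_iff.1 (H j hj)
    exact (mul_eq_zero.1 h0).resolve_left fun hs0 => hs (hs0 ▸ P.zero_mem)
  have := mem_vIdeal.1 hx s a ha0 H
  exact (hP.mem_or_mem (P.mem_of_dvd this (hle ha))).resolve_left hs

omit [IsDomain D] in
/-- Primes below a valuative prime form a chain. -/
theorem ValAt.le_total {P Q M : Ideal D} (h : ValAt M) (hP : P.IsPrime) (hQ : Q.IsPrime)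
    (hPM : P ≤ M) (hQM : Q ≤ M) : P ≤ Q ∨ Q ≤ P := by
  by_contra hcon
  rw [not_or] at hcon
  obtain ⟨a, haP, haQ⟩ := Set.not_subset.1 hcon.1
  obtain ⟨b, hbQ, hbP⟩ := Set.not_subset.1 hcon.2
  obtain ⟨s, hs, hd | hd⟩ := h a b
  · exact (hP.mem_or_mem (P.mem_of_dvd hd haP)).elim (fun h => hs (hPM h)) hbP
  · exact (hQ.mem_or_mem (Q.mem_of_dvd hd hbQ)).elim (fun h => hs (hQM h)) haQ

theorem IsPVMD.valAt_of_mem_tMax (hR : IsPVMD D) {M : Ideal D} (hM : M ∈ tMax D) : ValAt M := by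
  have hinj := IsFractionRing.injective D (FractionRing D)
  have h1 : (1 : D) ∉ M := fun h => hM.2.1 ((Ideal.eq_top_iff_one M).2 h)
  intro a b
  by_cases ha : a = 0
  · exact ⟨1, h1, Or.inr (by simp [ha])⟩
  by_cases hb : b = 0
  · exact ⟨1, h1, Or.inl (by simp [hb])⟩
  have ha' : algebraMap D (FractionRing D) a ≠ 0 := by simpa using ha
  have hb' : algebraMap D (FractionRing D) b ≠ 0 := by simpa using hb
  rcases hR M hM (algebraMap D _ a / algebraMap D _ b) (div_ne_zero ha' hb') with
    ⟨r, s, hs, h⟩ | ⟨r, s, hs, h⟩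
  · refine ⟨s, hs, Or.inr ⟨r, hinj ?_⟩⟩
    rw [div_mul_eq_mul_div, div_eq_iff hb', ← map_mul, ← map_mul] at h
    rw [mul_comm s, h, mul_comm]
  · refine ⟨s, hs, Or.inl ⟨r, hinj ?_⟩⟩
    rw [inv_div, div_mul_eq_mul_div, div_eq_iff ha', ← map_mul, ← map_mul] at h
    rw [mul_comm s, h, mul_comm]

theorem IsPVMD.valAt (hR : IsPVMD D) {P : Ideal D} (hP : IsTPrime D P) : ValAt P :=
  let ⟨_, hM, hle⟩ := exists_tMax_of_tPrime hP
  (hR.valAt_of_mem_tMax hM).mono hle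

/-- In a PVMD, two `t`-primes inside a common maximal `t`-ideal are comparable. -/
theorem IsPVMD.le_total (hR : IsPVMD D) {P Q M : Ideal D} (hM : M ∈ tMax D) (hP : P.IsPrime)
    (hQ : Q.IsPrime) (hPM : P ≤ M) (hQM : Q ≤ M) : P ≤ Q ∨ Q ≤ P :=
  (hR.valAt_of_mem_tMax hM).le_total hP hQ hPM hQM

end Valuation

/-! ### Conductor ideals and `v`-finiteness -/

section Colon

variable {D : Type*} [CommRing D]

theorem mem_colonIdeal {u : FractionRing D} {r : D} :
    r ∈ colonIdeal D u ↔ ∃ y, algebraMap D (FractionRing D) y = u * algebraMap D _ r := by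
  simp only [colonIdeal, Submodule.mem_comap, Submodule.mem_one, LinearMap.mulLeft_apply,
    Algebra.linearMap_apply]

theorem colonIdeal_le_iff {u : FractionRing D} {P : Ideal D} :
    colonIdeal D u ≤ P ↔ u ∉ locSet D P := by
  constructor
  · rintro h ⟨r, s, hs, hu⟩
    exact hs (h (mem_colonIdeal.2 ⟨r, hu.symm⟩))
  · intro h r hr
    by_contra hrP
    obtain ⟨y, hy⟩ := mem_colonIdeal.1 hr
    exact h ⟨y, r, hrP, hy.symm⟩

variable [IsDomain D]

theorem mem_colonIdeal_div {a b r : D} (hb : b ≠ 0) :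
    r ∈ colonIdeal D (algebraMap D _ a / algebraMap D _ b) ↔ b ∣ a * r := by
  have hinj := IsFractionRing.injective D (FractionRing D)
  have hb' : algebraMap D (FractionRing D) b ≠ 0 := by simpa using hb
  rw [mem_colonIdeal]
  refine exists_congr fun y => ?_
  rw [div_mul_eq_mul_div, eq_div_iff hb', ← map_mul, ← map_mul, hinj.eq_iff, mul_comm y, eq_comm]

end Colon

section Conditions

variable {R : Type*} [CommRing R] [IsDomain R]

/-- If some `I ∈ Φ(Λ)` contained no `v`-finite member of `Φ(Λ)`, it would lie in a `t`-prime `Q` all of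
whose finitely generated subideals lie in members of `Λ`. Those members of `Λ` that contain the given
finitely generated `J ⊆ Q` lie in `Q` and are pairwise comparable, so there is only one of them; it
then contains every element of `Q`, a contradiction. -/
theorem phiVFinite_of_fg (hR : IsPVMD R)
    (h3 : ∀ P : Ideal R, IsTPrime R P →
      ∃ J : Ideal R, J.FG ∧ J ≤ P ∧ ∀ M ∈ tMax R, ¬ P ≤ M → ¬ J ≤ M)
    (Λ : Set (Ideal R)) (hΛ : IncompTPrimes R Λ) : PhiVFinite R Λ := by
  rintro I ⟨hI, hIΛ⟩
  by_cases hgood : ∃ J : Ideal R, J.FG ∧ J ≤ I ∧ ∀ P ∈ Λ, ¬ J ≤ P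
  · obtain ⟨J, hJ, hJI, hJΛ⟩ := hgood
    obtain ⟨y, hy, hy0⟩ := Submodule.exists_mem_ne_zero_of_ne_bot hI.1
    have hfg : (J ⊔ Ideal.span {y}).FG := Submodule.FG.sup hJ (Submodule.fg_span_singleton y)
    have hne : J ⊔ Ideal.span {y} ≠ ⊥ := by
      intro h
      rw [sup_eq_bot_iff] at h
      exact hy0 (by simpa using h.2)
    exact ⟨vIdeal R (J ⊔ Ideal.span {y}), ⟨isTIdeal_vIdeal hne, fun P hP hle =>
      hJΛ P hP (le_sup_left.trans ((le_vIdeal _).trans hle))⟩,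
      hI.vIdeal_le hfg (sup_le hJI ((Ideal.span_singleton_le_iff_mem I).2 hy)), _, hfg, rfl⟩
  · exfalso
    obtain ⟨Q, hIQ, hQ, hQB, -⟩ := exists_tPrime_avoiding {J : Ideal R | ∀ P ∈ Λ, ¬ J ≤ P}
      (fun P hP h => (hΛ.1 P hP).1.ne_top (top_le_iff.1 h))
      (fun J₁ h₁ J₂ h₂ P hP h => ((hΛ.1 P hP).1.mul_le.1 h).elim (h₁ P hP) (h₂ P hP))
      (fun J hJ H hH _ hle P hP h => hJ P hP (hle.trans ((hΛ.1 P hP).2.vIdeal_le hH h)))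
      hI (fun J hJB hJ hle => hgood ⟨J, hJ, hle, hJB⟩)
    obtain ⟨J, hJ, hJQ, hJM⟩ := h3 Q hQ
    -- Every member of `Λ` containing `J` is contained in `Q`.
    have hbelow : ∀ P ∈ Λ, J ≤ P → P ≤ Q := by
      intro P hP hJP
      obtain ⟨M, hM, hPM⟩ := exists_tMax_of_tPrime (hΛ.1 P hP)
      have hQM : Q ≤ M := by
        by_contra hQM
        exact hJM M hM hQM (hJP.trans hPM)
      exact (hR.le_total hM (hΛ.1 P hP).1 hQ.1 hPM hQM).resolve_right
        fun h => hIΛ P hP (hIQ.trans h)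
    have hex : ∀ H : Ideal R, H.FG → H ≤ Q → ∃ P ∈ Λ, H ≤ P := by
      intro H hH hHQ
      by_contra hcon
      exact hQB H (fun P hP h => hcon ⟨P, hP, h⟩) hH hHQ
    obtain ⟨P, hP, hJP⟩ := hex J hJ hJQ
    obtain ⟨x, hxQ, hxP⟩ := Set.not_subset.1 fun h : Q ≤ P => hIΛ P hP (hIQ.trans h)
    obtain ⟨P', hP', hle⟩ := hex (J ⊔ Ideal.span {x})
      (Submodule.FG.sup hJ (Submodule.fg_span_singleton x))
      (sup_le hJQ ((Ideal.span_singleton_le_iff_mem Q).2 hxQ))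
    have hxP' : x ∈ P' := (Ideal.span_singleton_le_iff_mem P').1 (le_sup_right.trans hle)
    obtain ⟨M, hM, hQM⟩ := exists_tMax_of_tPrime hQ
    have heq : P = P' := by
      rcases hR.le_total hM (hΛ.1 P hP).1 (hΛ.1 P' hP').1 ((hbelow P hP hJP).trans hQM)
        ((hbelow P' hP' (le_sup_left.trans hle)).trans hQM) with h | h
      · exact hΛ.2 P hP P' hP' h
      · exact (hΛ.2 P' hP' P hP h).symm
    exact hxP (heq ▸ hxP')

theorem fg_of_phiVFinite (h2 : ∀ Λ : Set (Ideal R), Λ ⊆ tMax R → PhiVFinite R Λ)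
    (P : Ideal R) (hP : IsTPrime R P) :
    ∃ J : Ideal R, J.FG ∧ J ≤ P ∧ ∀ M ∈ tMax R, ¬ P ≤ M → ¬ J ≤ M := by
  obtain ⟨J, hJ, hJP, H, hH, rfl⟩ := h2 {M ∈ tMax R | ¬ P ≤ M} (fun M hM => hM.1) P
    ⟨hP.2, fun M hM => hM.2⟩
  exact ⟨H, hH, (le_vIdeal H).trans hJP, fun M hM hPM hle =>
    hJ.2 M ⟨hM, hPM⟩ (hM.1.vIdeal_le hH hle)⟩

theorem colon_of_fg (hR : IsPVMD R) {P : Ideal R} (hP : IsTPrime R P)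
    (h : ∃ J : Ideal R, J.FG ∧ J ≤ P ∧ ∀ M ∈ tMax R, ¬ P ≤ M → ¬ J ≤ M) :
    ∃ u : FractionRing R, colonIdeal R u ≤ P ∧
      ∀ M ∈ tMax R, ¬ P ≤ M → ¬ colonIdeal R u ≤ M := by
  obtain ⟨J, hJ, hJP, hJM⟩ := h
  obtain ⟨y, hy, hy0⟩ := Submodule.exists_mem_ne_zero_of_ne_bot hP.2.1
  obtain ⟨a, ha, s, hs, H⟩ := (hR.valAt hP).exists_local_gen hP.1
    (Submodule.FG.sup hJ (Submodule.fg_span_singleton y))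
  have hs0 : s ≠ 0 := fun h => hs (h ▸ P.zero_mem)
  have ha0 : a ≠ 0 := by
    rintro rfl
    have := zero_dvd_iff.1 (H y (Ideal.mem_sup_right (Ideal.mem_span_singleton_self y)))
    exact (mul_ne_zero hs0 hy0) this
  have haP : a ∈ P := (sup_le hJP ((Ideal.span_singleton_le_iff_mem P).2 hy)) ha
  -- `a` generates `J` locally at `P`, and `s / a` is an element of `J⁻¹` outside `R_P`.
  refine ⟨algebraMap R _ s / algebraMap R _ a, fun r hr => ?_, fun M hM hPM hle => ?_⟩
  · rw [mem_colonIdeal_div ha0] at hr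
    exact (hP.1.mem_or_mem (P.mem_of_dvd hr haP)).resolve_left hs
  · exact hJM M hM hPM fun j hj => hle ((mem_colonIdeal_div ha0).2 (H j (Ideal.mem_sup_left hj)))

/-- In a PVMD the ideal `(R :_R u)` behaves like a `v`-finite ideal: it contains a finitely
generated ideal lying in exactly the same maximal `t`-ideals. -/
theorem exists_fg_le_colonIdeal (hR : IsPVMD R) (u : FractionRing R) :
    ∃ N : Ideal R, N.FG ∧ N ≤ colonIdeal R u ∧ ∀ M ∈ tMax R, N ≤ M → colonIdeal R u ≤ M := by
  obtain ⟨a, b, hb, rfl⟩ := IsFractionRing.div_surjective (A := R) u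
  have hb0 : b ≠ 0 := nonZeroDivisors.ne_zero hb
  set C := colonIdeal R (algebraMap R (FractionRing R) a / algebraMap R _ b) with hCdef
  have hC : ∀ r, r ∈ C ↔ b ∣ a * r := fun r => mem_colonIdeal_div hb0
  -- `A` collects the `s` for which `s C` lies in a finitely generated subideal of `C`;
  -- it contains `C = (R : u)` and `(R : u⁻¹)`.
  let A : Ideal R :=
    { carrier := {s | ∃ N : Ideal R, N.FG ∧ N ≤ C ∧ ∀ r ∈ C, s * r ∈ N}
      zero_mem' := ⟨⊥, Submodule.fg_bot, bot_le, fun r _ => by simp⟩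
      add_mem' := by
        rintro s t ⟨N, h1, h2, h3⟩ ⟨N', h1', h2', h3'⟩
        refine ⟨N ⊔ N', Submodule.FG.sup h1 h1', sup_le h2 h2', fun r hr => ?_⟩
        rw [add_mul]
        exact add_mem (Ideal.mem_sup_left (h3 r hr)) (Ideal.mem_sup_right (h3' r hr))
      smul_mem' := by
        rintro c s ⟨N, h1, h2, h3⟩
        refine ⟨N, h1, h2, fun r hr => ?_⟩
        rw [smul_eq_mul, mul_assoc]
        exact N.mul_mem_left c (h3 r hr) }
  have hCA : C ≤ A := by
    intro n hn
    refine ⟨Ideal.span {n}, Submodule.fg_span_singleton n,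
      (Ideal.span_singleton_le_iff_mem C).2 hn, fun r _ => ?_⟩
    exact Ideal.mul_mem_right _ _ (Ideal.mem_span_singleton_self n)
  have hC'A : ∀ t, a ∣ b * t → t ∈ A := by
    rintro t ⟨c, hc⟩
    refine ⟨Ideal.span {c}, Submodule.fg_span_singleton c,
      (Ideal.span_singleton_le_iff_mem C).2 ((hC c).2 ⟨t, hc.symm⟩), fun r hr => ?_⟩
    obtain ⟨d, hd⟩ := (hC r).1 hr
    refine Ideal.mem_span_singleton.2 ⟨d, mul_left_cancel₀ hb0 ?_⟩
    linear_combination r * hc + c * hd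
  have hA0 : A ≠ ⊥ := by
    intro h
    have : b ∈ A := hCA ((hC b).2 (Dvd.intro_left a rfl))
    rw [h] at this
    exact hb0 this
  have hAM : ∀ M ∈ tMax R, ¬ A ≤ M := by
    intro M hM hle
    obtain ⟨s, hs, hd | hd⟩ := hR.valAt_of_mem_tMax hM a b
    · exact hs (hle (hC'A s (by rwa [mul_comm])))
    · exact hs (hle (hCA ((hC s).2 (by rwa [mul_comm]))))
  have hAt : tIdeal R A = ⊤ := by
    by_contra hne
    obtain ⟨M, hM, hle, _⟩ := exists_tMax_prime (isTIdeal_tIdeal hA0) hne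
    exact hAM M hM ((le_tIdeal hA0).trans hle)
  obtain ⟨L, hL, -, hLA, hL1⟩ := (mem_tIdeal hA0).1 (hAt ▸ trivial : (1 : R) ∈ tIdeal R A)
  have hN : ∃ N : Ideal R, N.FG ∧ N ≤ C ∧ ∀ s ∈ L, ∀ r ∈ C, s * r ∈ N := by
    clear hL1
    induction L, hL using Submodule.fg_induction with
    | singleton x =>
      obtain ⟨N, h1, h2, h3⟩ := hLA (Ideal.mem_span_singleton_self x)
      refine ⟨N, h1, h2, fun s hs r hr => ?_⟩
      obtain ⟨c, rfl⟩ := Ideal.mem_span_singleton.1 hs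
      rw [mul_right_comm]
      exact N.mul_mem_right c (h3 r hr)
    | sup L₁ L₂ _ _ ih₁ ih₂ =>
      obtain ⟨N, h1, h2, h3⟩ := ih₁ (le_sup_left.trans hLA)
      obtain ⟨N', h1', h2', h3'⟩ := ih₂ (le_sup_right.trans hLA)
      refine ⟨N ⊔ N', Submodule.FG.sup h1 h1', sup_le h2 h2', fun s hs r hr => ?_⟩
      obtain ⟨x, hx, y, hy, rfl⟩ := Submodule.mem_sup.1 hs
      rw [add_mul]
      exact add_mem (Ideal.mem_sup_left (h3 x hx r hr)) (Ideal.mem_sup_right (h3' y hy r hr))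
  obtain ⟨N, h1, h2, h3⟩ := hN
  refine ⟨N, h1, h2, fun M hM hle r hr => ?_⟩
  obtain ⟨s, hsL, hsM⟩ := Set.not_subset.1 fun h : L ≤ M =>
    hM.2.1 ((Ideal.eq_top_iff_one M).2 (hM.1.vIdeal_le hL h hL1))
  exact ((isTPrime_of_mem_tMax hM).1.mem_or_mem (hle (h3 s hsL r hr))).resolve_left hsM

theorem fg_of_colon (hR : IsPVMD R) {P : Ideal R}
    (h : ∃ u : FractionRing R, colonIdeal R u ≤ P ∧
      ∀ M ∈ tMax R, ¬ P ≤ M → ¬ colonIdeal R u ≤ M) :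
    ∃ J : Ideal R, J.FG ∧ J ≤ P ∧ ∀ M ∈ tMax R, ¬ P ≤ M → ¬ J ≤ M := by
  obtain ⟨u, huP, huM⟩ := h
  obtain ⟨N, h1, h2, h3⟩ := exists_fg_le_colonIdeal hR u
  exact ⟨N, h1, h2.trans huP, fun M hM hPM hle => huM M hM hPM (h3 M hM hle)⟩

omit [IsDomain R] in
/-- Both conditions describe the same elements `u`, since `(R :_R u) ⊆ P` means `u ∉ R_P`. -/
theorem colon_iff_loc {P : Ideal R} :
    (∃ u : FractionRing R, colonIdeal R u ≤ P ∧
      ∀ M ∈ tMax R, ¬ P ≤ M → ¬ colonIdeal R u ≤ M) ↔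
    ¬ (⋂ M ∈ {M ∈ tMax R | ¬ P ≤ M}, locSet R M) ⊆ locSet R P := by
  simp only [Set.not_subset, colonIdeal_le_iff, not_not, Set.mem_iInter, Set.mem_ofPred_eq, and_imp]
  exact exists_congr fun u => and_comm

end Conditions

/-! ### `t`-linked and `t`-flat overrings -/

section Overrings

variable {R : Type*} [CommRing R] [IsDomain R] {T : Subring (FractionRing R)}

theorem IsOverring.isFractionRing (h : IsOverring R T) : IsFractionRing T (FractionRing R) := by
  refine IsFractionRing.of_field T (FractionRing R) fun z => ?_
  obtain ⟨a, b, -, rfl⟩ := IsFractionRing.div_surjective (A := R) z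
  exact ⟨⟨_, h a⟩, ⟨_, h b⟩, rfl⟩

/-- The `t#`-property of an overring `T` can be tested on localizations taken inside the quotient
field of `R` instead of `FractionRing T`. -/
theorem IsOverring.isTSharp_iff (h : IsOverring R T) : IsTSharp T ↔
    ∀ 𝔐₁ 𝔐₂ : Set (Ideal T), 𝔐₁ ⊆ tMax T → 𝔐₂ ⊆ tMax T → 𝔐₁ ≠ 𝔐₂ →
      (⋂ M ∈ 𝔐₁, locSetSub R T M) ≠ ⋂ M ∈ 𝔐₂, locSetSub R T M := by
  have := h.isFractionRing
  let e : FractionRing T ≃ₐ[T] FractionRing R := FractionRing.algEquiv T (FractionRing R)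
  have hloc : ∀ N : Ideal T, locSet T N = e ⁻¹' locSetSub R T N := by
    intro N
    ext x
    refine exists_congr fun r => exists_congr fun s => and_congr_right fun _ => ?_
    rw [← e.injective.eq_iff, map_mul, e.commutes, e.commutes]
    rfl
  have hint : ∀ 𝔐 : Set (Ideal T),
      (⋂ M ∈ 𝔐, locSet T M) = e ⁻¹' ⋂ M ∈ 𝔐, locSetSub R T M := by
    intro 𝔐
    simp only [hloc, Set.preimage_iInter]
  unfold IsTSharp
  simp only [hint, ne_eq, e.surjective.preimage_injective.eq_iff]

omit [IsDomain R] in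
theorem mem_comap_intoOverring (h : IsOverring R T) {N : Ideal T} {r : R} :
    r ∈ Ideal.comap (intoOverring R T h) N ↔ (⟨algebraMap R _ r, h r⟩ : T) ∈ N := Iff.rfl

theorem comap_intoOverring_ne_bot (h : IsOverring R T) {N : Ideal T} (hN : N ≠ ⊥) :
    Ideal.comap (intoOverring R T h) N ≠ ⊥ := by
  obtain ⟨⟨t, ht⟩, htN, ht0⟩ := Submodule.exists_mem_ne_zero_of_ne_bot hN
  obtain ⟨a, b, hb, rfl⟩ := IsFractionRing.div_surjective (A := R) t
  have hb' : algebraMap R (FractionRing R) b ≠ 0 := by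
    simpa using nonZeroDivisors.ne_zero hb
  intro hbot
  have ha : a ∈ Ideal.comap (intoOverring R T h) N := by
    have := N.mul_mem_left ⟨_, h b⟩ htN
    rw [mem_comap_intoOverring]
    convert this using 1
    exact Subtype.ext (mul_div_cancel₀ _ hb').symm
  rw [hbot] at ha
  apply ht0
  have ha : a = 0 := ha
  simp [ha]

theorem mem_of_forall_locSetSub (h : IsOverring R T) {x : FractionRing R}
    (hx : ∀ N ∈ tMax T, x ∈ locSetSub R T N) : x ∈ T := by
  obtain ⟨a, b, hb, rfl⟩ := IsFractionRing.div_surjective (A := R) x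
  have hb' : algebraMap R (FractionRing R) b ≠ 0 := by
    simpa using nonZeroDivisors.ne_zero hb
  obtain ⟨c, hc⟩ := dvd_of_forall_tMax (D := T) (a := ⟨_, h a⟩) (b := ⟨_, h b⟩)
    (fun h0 => hb' (congrArg Subtype.val h0)) (fun N hN => by
      obtain ⟨r, s, hs, hrs⟩ := hx N hN
      refine ⟨s, hs, r, Subtype.ext ?_⟩
      rw [div_mul_eq_mul_div, div_eq_iff hb'] at hrs
      rw [Subring.coe_mul, Subring.coe_mul, hrs, mul_comm])
  have hc : algebraMap R (FractionRing R) a = algebraMap R _ b * c := congrArg Subtype.val hc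
  rw [hc, mul_div_cancel_left₀ _ hb']
  exact c.2

omit [IsDomain R] in
theorem subset_locSetSub {N : Ideal T} (hN : N ≠ ⊤) : (T : Set (FractionRing R)) ⊆
    locSetSub R T N :=
  fun x hx => ⟨⟨x, hx⟩, 1, fun h => hN ((Ideal.eq_top_iff_one N).2 h), by simp⟩

omit [IsDomain R] in
/-- A finitely generated ideal multiplying `x` into `R_p` is multiplied into `R` by a single
multiple `s x` with `s ∉ p`. -/
theorem exists_common_denominator {p : Ideal R} (hp : p.IsPrime) {J : Ideal R} (hJ : J.FG)
    {x : FractionRing R} (h : ∀ j ∈ J, x * algebraMap R _ j ∈ locSet R p) :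
    ∃ s ∉ p, ∀ j ∈ J, ∃ r, x * algebraMap R _ s * algebraMap R _ j =
      algebraMap R (FractionRing R) r := by
  induction J, hJ using Submodule.fg_induction with
  | singleton y =>
    obtain ⟨r, s, hs, hrs⟩ := h y (Ideal.mem_span_singleton_self y)
    refine ⟨s, hs, fun j hj => ?_⟩
    obtain ⟨c, rfl⟩ := Ideal.mem_span_singleton.1 hj
    refine ⟨r * c, ?_⟩
    rw [map_mul, map_mul, ← hrs]
    ring
  | sup J₁ J₂ _ _ ih₁ ih₂ =>
    obtain ⟨s, hs, H⟩ := ih₁ fun j hj => h j (Ideal.mem_sup_left hj)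
    obtain ⟨t, ht, H'⟩ := ih₂ fun j hj => h j (Ideal.mem_sup_right hj)
    refine ⟨s * t, fun hc => (hp.mem_or_mem hc).elim hs ht, fun j hj => ?_⟩
    obtain ⟨y, hy, z, hz, rfl⟩ := Submodule.mem_sup.1 hj
    obtain ⟨r, hr⟩ := H y hy
    obtain ⟨r', hr'⟩ := H' z hz
    refine ⟨t * r + s * r', ?_⟩
    simp only [map_add, map_mul, ← hr, ← hr']
    ring

omit [IsDomain R] in
theorem mem_one_div_idealSub {J : Ideal R} {x : FractionRing R} :
    x ∈ (1 : Submodule R (FractionRing R)) / idealSub R J ↔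
      ∀ j ∈ J, ∃ r, x * algebraMap R _ j = algebraMap R (FractionRing R) r := by
  rw [Submodule.mem_div_iff_forall_mul_mem]
  simp only [Submodule.mem_one, idealSub, Submodule.mem_map, forall_exists_index, and_imp,
    forall_apply_eq_imp_iff₂, Algebra.linearMap_apply]
  exact forall₂_congr fun _ _ => exists_congr fun _ => eq_comm

theorem one_div_idealSub_eq_one {J : Ideal R} (hJ : (1 : R) ∈ vIdeal R J) :
    (1 : Submodule R (FractionRing R)) / idealSub R J = 1 := by
  have hinj := IsFractionRing.injective R (FractionRing R)
  ext x
  rw [mem_one_div_idealSub, Submodule.mem_one]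
  constructor
  · intro h
    obtain ⟨a, b, hb, rfl⟩ := IsFractionRing.div_surjective (A := R) x
    have hb0 : b ≠ 0 := nonZeroDivisors.ne_zero hb
    have hb' : algebraMap R (FractionRing R) b ≠ 0 := by simpa using hb0
    obtain ⟨c, hc⟩ := mem_vIdeal.1 hJ a b hb0 fun j hj => by
      obtain ⟨r, hr⟩ := h j hj
      refine ⟨r, hinj ?_⟩
      rw [div_mul_eq_mul_div, div_eq_iff hb', ← map_mul, ← map_mul] at hr
      rw [hr, mul_comm]
    refine ⟨c, ?_⟩
    rw [eq_div_iff hb', ← map_mul, mul_comm, ← hc, mul_one]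
  · rintro ⟨y, rfl⟩ j _
    exact ⟨y * j, (map_mul _ _ _).symm⟩

/-- Every `t`-flat overring is `t`-linked, because `T = ⋂ T_N` over the maximal `t`-ideals `N`. -/
theorem isTLinked_of_isTFlat (hT : IsTFlat R T) : IsTLinked R T := by
  obtain ⟨h, hflat⟩ := hT
  intro I _ hI hinv
  refine Set.Subset.antisymm (fun x hx => ?_) (fun x hx a _ => T.mul_mem hx (h a))
  refine mem_of_forall_locSetSub h fun N hN => ?_
  have hNp := (isTPrime_of_mem_tMax hN).1
  rw [hflat N hN]
  obtain ⟨s, hs, H⟩ := exists_common_denominator (p := Ideal.comap (intoOverring R T h) N)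
    (Ideal.comap_isPrime _ _) hI (x := x) (fun j hj => by
      rw [← hflat N hN]
      exact subset_locSetSub hN.2.1 (hx j hj))
  have := mem_one_div_idealSub.2 H
  rw [hinv, Submodule.mem_one] at this
  obtain ⟨y, hy⟩ := this
  exact ⟨y, s, hs, hy.symm⟩

/-- Maximal `t`-ideals of a `t`-linked overring have contractions lying in maximal
`t`-ideals. -/
theorem exists_tMax_ge_comap (h : IsOverring R T) (hT : IsTLinked R T) {N : Ideal T}
    (hN : N ∈ tMax T) : ∃ M ∈ tMax R, Ideal.comap (intoOverring R T h) N ≤ M := by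
  set p := Ideal.comap (intoOverring R T h) N with hp
  have hp0 : p ≠ ⊥ := comap_intoOverring_ne_bot h hN.1.1
  by_cases htop : tIdeal R p = ⊤
  · exfalso
    obtain ⟨J, hJ, hJ0, hJp, hJ1⟩ := (mem_tIdeal hp0).1 (htop ▸ trivial : (1 : R) ∈ tIdeal R p)
    have hlink := hT J hJ0 hJ (one_div_idealSub_eq_one hJ1)
    refine hN.2.1 ((Ideal.eq_top_iff_one N).2
      (hN.1.vIdeal_le (J := J.map (intoOverring R T h)) (Ideal.FG.map hJ _)
        (Ideal.map_le_iff_le_comap.2 hJp) (mem_vIdeal.2 ?_)))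
    intro a b hb H
    have hb' : (b : FractionRing R) ≠ 0 := fun h => hb (Subtype.ext h)
    have hx : (a : FractionRing R) / b ∈ T := by
      rw [← SetLike.mem_coe, ← hlink]
      intro j hj
      obtain ⟨c, hc⟩ := H _ (Ideal.mem_map_of_mem _ hj)
      have hc : (a : FractionRing R) * algebraMap R _ j = b * c := congrArg Subtype.val hc
      rw [div_mul_eq_mul_div, hc, mul_div_cancel_left₀ _ hb']
      exact c.2
    refine ⟨⟨_, hx⟩, Subtype.ext ?_⟩
    rw [mul_one]
    exact (mul_div_cancel₀ _ hb').symm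
  · obtain ⟨M, hM, hle, _⟩ := exists_tMax_prime (isTIdeal_tIdeal hp0) htop
    exact ⟨M, hM, (le_tIdeal hp0).trans hle⟩

/-- Over a PVMD the contraction of a maximal `t`-ideal of a `t`-linked overring is a prime inside a
valuative prime, hence a `t`-prime. -/
theorem comap_isTPrime (hR : IsPVMD R) (h : IsOverring R T) (hT : IsTLinked R T) {N : Ideal T}
    (hN : N ∈ tMax T) : IsTPrime R (Ideal.comap (intoOverring R T h) N) := by
  obtain ⟨M, hM, hle⟩ := exists_tMax_ge_comap h hT hN
  have hNp := (isTPrime_of_mem_tMax hN).1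
  exact ((hR.valAt_of_mem_tMax hM).mono hle).isTPrime (Ideal.comap_isPrime _ _)
    (comap_intoOverring_ne_bot h hN.1.1)

/-- Over a PVMD, `t`-linked overrings are `t`-flat: `T_N` is a local overring of the valuation
domain `R_{N ∩ R}` lying over its maximal ideal. -/
theorem isTFlat_of_isTLinked (hR : IsPVMD R) (h : IsOverring R T) (hT : IsTLinked R T) :
    IsTFlat R T := by
  refine ⟨h, fun N hN => ?_⟩
  have hp := comap_isTPrime hR h hT hN
  have hNp := (isTPrime_of_mem_tMax hN).1
  refine Set.Subset.antisymm ?_ ?_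
  · rintro x ⟨r, n, hn, hx⟩
    obtain ⟨a, b, hb, rfl⟩ := IsFractionRing.div_surjective (A := R) x
    have hb' : algebraMap R (FractionRing R) b ≠ 0 := by
      simpa using nonZeroDivisors.ne_zero hb
    obtain ⟨s, hs, ⟨t, ht⟩ | ⟨t, ht⟩⟩ := hR.valAt hp a b
    · have hst : algebraMap R (FractionRing R) a / algebraMap R _ b * algebraMap R _ t =
          algebraMap R _ s := by
        rw [div_mul_eq_mul_div, ← map_mul, ← ht, map_mul, mul_div_cancel_right₀ _ hb']
      refine ⟨s, t, fun htp => ?_, hst⟩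
      have hsn : r * ⟨_, h t⟩ = ⟨_, h s⟩ * n := Subtype.ext (by
        change (r : FractionRing R) * algebraMap R _ t = algebraMap R _ s * n
        rw [← hx, ← hst]
        ring)
      exact (hNp.mem_or_mem (hsn ▸ N.mul_mem_left r htp)).elim hs hn
    · refine ⟨t, s, hs, ?_⟩
      rw [div_mul_eq_mul_div, ← map_mul, mul_comm, ht, map_mul, mul_div_cancel_left₀ _ hb']
  · rintro x ⟨r, s, hs, hx⟩
    exact ⟨⟨_, h r⟩, ⟨_, h s⟩, hs, hx⟩

theorem le_of_locSetSub_subset {N N' : Ideal T}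
    (h : locSetSub R T N' ⊆ locSetSub R T N) : N ≤ N' := by
  intro x hx
  by_contra hxN'
  have hx0 : (x : FractionRing R) ≠ 0 := fun h => hxN' (by
    rw [show x = 0 from Subtype.ext h]
    exact N'.zero_mem)
  obtain ⟨r, s, hs, hrs⟩ := h (a := (x : FractionRing R)⁻¹) ⟨1, x, hxN', by simp [hx0]⟩
  have : s = x * r := Subtype.ext (by
    rw [Subring.coe_mul, ← hrs, mul_inv_cancel_left₀ hx0])
  exact hs (this ▸ N.mul_mem_right r hx)

/-- Let `N` be a maximal `t`-ideal of `T` and let `u` separate `P = N ∩ R` from the maximal `t`-ideals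
of `R` not containing `P`. Then `u ∉ T_N`, while `u ∈ T_{N'}` for every other maximal `t`-ideal `N'`:
otherwise `N ∩ R` and `N' ∩ R` lie in a common maximal `t`-ideal, hence are comparable. -/
theorem isTSharp_of_isTLinked (hR : IsPVMD R)
    (h4 : ∀ P : Ideal R, IsTPrime R P → ∃ u : FractionRing R, colonIdeal R u ≤ P ∧
      ∀ M ∈ tMax R, ¬ P ≤ M → ¬ colonIdeal R u ≤ M)
    (h : IsOverring R T) (hT : IsTLinked R T) : IsTSharp T := by
  obtain ⟨_, hflat⟩ := isTFlat_of_isTLinked hR h hT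
  have key : ∀ 𝔐₁ 𝔐₂ : Set (Ideal T), 𝔐₁ ⊆ tMax T → 𝔐₂ ⊆ tMax T →
      (⋂ M ∈ 𝔐₁, locSetSub R T M) = (⋂ M ∈ 𝔐₂, locSetSub R T M) → 𝔐₁ ⊆ 𝔐₂ := by
    intro 𝔐₁ 𝔐₂ h₁ h₂ heq N hN
    by_contra hN₂
    have hNt := h₁ hN
    have hP := comap_isTPrime hR h hT hNt
    obtain ⟨u, huP, huM⟩ := h4 _ hP
    have hu : u ∈ ⋂ M ∈ 𝔐₂, locSetSub R T M := by
      refine Set.mem_iInter₂.2 fun N' hN' => ?_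
      have hNt' := h₂ hN'
      rw [hflat N' hNt']
      by_contra hu'
      obtain ⟨M, hM, hle⟩ := exists_tMax_ge_comap h hT hNt'
      have hPM : Ideal.comap (intoOverring R T h) N ≤ M := by
        by_contra hPM
        exact huM M hM hPM ((colonIdeal_le_iff.2 hu').trans hle)
      -- Comparable contractions give nested localizations, hence `N = N'`.
      have hsub : ∀ {P Q : Ideal R}, P ≤ Q → locSet R Q ⊆ locSet R P :=
        fun hPQ x ⟨r, s, hs, hx⟩ => ⟨r, s, fun hsP => hs (hPQ hsP), hx⟩
      rcases hR.le_total hM hP.1 (comap_isTPrime hR h hT hNt').1 hPM hle with hc | hc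
      · have := tMax_eq_of_le hNt hNt' (le_of_locSetSub_subset (by
          rw [hflat N hNt, hflat N' hNt']
          exact hsub hc))
        exact hN₂ (this ▸ hN')
      · have := tMax_eq_of_le hNt' hNt (le_of_locSetSub_subset (by
          rw [hflat N hNt, hflat N' hNt']
          exact hsub hc))
        exact hN₂ (this ▸ hN')
    rw [← heq] at hu
    have := Set.mem_iInter₂.1 hu N hN
    rw [hflat N hNt] at this
    exact colonIdeal_le_iff.1 huP this
  rw [h.isTSharp_iff]
  intro 𝔐₁ 𝔐₂ h₁ h₂ hne heq
  exact hne (Set.Subset.antisymm (key 𝔐₁ 𝔐₂ h₁ h₂ heq) (key 𝔐₂ 𝔐₁ h₂ h₁ heq.symm))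

end Overrings

/-! ### The overring `(P : P)` -/

section ColonPP

variable {R : Type*} [CommRing R]

theorem mem_colonPP {P : Ideal R} {x : FractionRing R} : x ∈ colonPP R P ↔
    ∀ a ∈ P, ∃ b ∈ P, algebraMap R (FractionRing R) b = x * algebraMap R _ a := Iff.rfl

theorem isOverring_colonPP (P : Ideal R) : IsOverring R (colonPP R P) :=
  fun r a ha => ⟨r * a, P.mul_mem_left r ha, map_mul (algebraMap R (FractionRing R)) _ _⟩

variable [IsDomain R]

/-- A finitely generated `I` with `I⁻¹ = R` is not contained in the `t`-ideal `P`, so `y I ⊆ P` with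
`y ∈ R` forces `y ∈ P`. -/
theorem isTLinked_colonPP {P : Ideal R} (hP : IsTPrime R P) : IsTLinked R (colonPP R P) := by
  have hinj := IsFractionRing.injective R (FractionRing R)
  intro I _ hI hinv
  refine Set.Subset.antisymm (fun x hx => ?_)
    (fun x hx a _ => (colonPP R P).mul_mem hx (isOverring_colonPP P a))
  refine mem_colonPP.2 fun p hp => ?_
  have hIP : ¬ I ≤ P := fun hle => hP.1.ne_top ((Ideal.eq_top_iff_one P).2
    (hP.2.vIdeal_le hI hle (by
      unfold vIdeal
      rw [hinv, Submodule.mem_comap, Submodule.mem_div_iff_forall_mul_mem]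
      intro y hy
      rwa [Algebra.linearMap_apply, map_one, one_mul])))
  have hmem : x * algebraMap R _ p ∈ (1 : Submodule R (FractionRing R)) / idealSub R I := by
    refine mem_one_div_idealSub.2 fun j hj => ?_
    obtain ⟨b, -, hb⟩ := mem_colonPP.1 (hx j hj) p hp
    exact ⟨b, by rw [hb]; ring⟩
  rw [hinv, Submodule.mem_one] at hmem
  obtain ⟨y, hy⟩ := hmem
  obtain ⟨j, hj, hjP⟩ := Set.not_subset.1 hIP
  obtain ⟨b, hb, hbx⟩ := mem_colonPP.1 (hx j hj) p hp
  have hyj : y * j = b := hinj (by rw [map_mul, hy, hbx]; ring)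
  exact ⟨y, (hP.1.mem_or_mem (hyj ▸ hb : y * j ∈ P)).resolve_right hjP, hy⟩

variable {T : Subring (FractionRing R)}

/-- If `T ⊆ R_Q` with `R_Q` a valuation domain, then `Q R_Q ∩ T` is a `t`-prime of `T`; hence some
maximal `t`-ideal of `T` contracts to an ideal containing `Q`. -/
theorem exists_tMax_comap_ge (h : IsOverring R T) {Q : Ideal R} (hQ : Q.IsPrime) (hQ0 : Q ≠ ⊥)
    (hv : ValAt Q) (hTQ : (T : Set (FractionRing R)) ⊆ locSet R Q) :
    ∃ N ∈ tMax T, Q ≤ Ideal.comap (intoOverring R T h) N := by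
  have hinj := IsFractionRing.injective R (FractionRing R)
  let Q' : Ideal T :=
    { carrier := {t | ∃ r s : R, s ∉ Q ∧ r ∈ Q ∧
        (t : FractionRing R) * algebraMap R _ s = algebraMap R _ r}
      zero_mem' := ⟨0, 1, fun h1 => hQ.ne_top ((Ideal.eq_top_iff_one Q).2 h1), Q.zero_mem, by simp⟩
      add_mem' := by
        rintro t t' ⟨r, s, hs, hr, hx⟩ ⟨r', s', hs', hr', hx'⟩
        refine ⟨r * s' + r' * s, s * s', fun hc => (hQ.mem_or_mem hc).elim hs hs',
          Q.add_mem (Q.mul_mem_right _ hr) (Q.mul_mem_right _ hr'), ?_⟩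
        simp only [map_add, map_mul, ← hx, ← hx', Subring.coe_add]
        ring
      smul_mem' := by
        rintro c t ⟨r, s, hs, hr, hx⟩
        obtain ⟨r', s', hs', hx'⟩ := hTQ c.2
        refine ⟨r' * r, s' * s, fun hc => (hQ.mem_or_mem hc).elim hs' hs, Q.mul_mem_left _ hr, ?_⟩
        simp only [map_mul, ← hx, ← hx', smul_eq_mul, Subring.coe_mul]
        ring }
  have hcon : ∀ {t : T} {r s : R}, s ∉ Q → (t : FractionRing R) * algebraMap R _ s =
      algebraMap R _ r → (t ∈ Q' ↔ r ∈ Q) := by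
    intro t r s hs hx
    refine ⟨?_, fun hr => ⟨r, s, hs, hr, hx⟩⟩
    rintro ⟨r', s', hs', hr', hx'⟩
    have : r * s' = r' * s := hinj (by rw [map_mul, map_mul, ← hx, ← hx']; ring)
    exact (hQ.mem_or_mem (this ▸ Q.mul_mem_right s hr' : r * s' ∈ Q)).resolve_right hs'
  have h1 : (1 : R) ∉ Q := fun h1 => hQ.ne_top ((Ideal.eq_top_iff_one Q).2 h1)
  have hR : ∀ r, (⟨algebraMap R _ r, h r⟩ : T) ∈ Q' ↔ r ∈ Q := fun r => hcon h1 (by simp)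
  have hQ'p : Q'.IsPrime := by
    refine ⟨fun htop => ?_, ?_⟩
    · have : (1 : T) ∈ Q' := htop ▸ trivial
      exact h1 ((hcon (r := 1) h1 (by simp)).1 this)
    · intro t t' htt
      obtain ⟨r, s, hs, hx⟩ := hTQ t.2
      obtain ⟨r', s', hs', hx'⟩ := hTQ t'.2
      have := (hcon (t := t * t') (r := r * r') (s := s * s')
        (fun hc => (hQ.mem_or_mem hc).elim hs hs') (by
          simp only [map_mul, ← hx, ← hx', Subring.coe_mul]; ring)).1 htt
      exact (hQ.mem_or_mem this).imp (hcon hs hx).2 (hcon hs' hx').2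
  have hQ'v : ValAt Q' := by
    intro t t'
    obtain ⟨r, s, hs, hx⟩ := hTQ t.2
    obtain ⟨r', s', hs', hx'⟩ := hTQ t'.2
    have hne : ∀ {s : R}, s ∉ Q → algebraMap R (FractionRing R) s ≠ 0 := by
      intro s hs h0
      have : s = 0 := by simpa using h0
      exact hs (this ▸ Q.zero_mem)
    obtain ⟨σ, hσ, ⟨c, hc⟩ | ⟨c, hc⟩⟩ := hv (r * s') (r' * s)
    · refine ⟨⟨_, h σ⟩, fun hm => hσ ((hR σ).1 hm), Or.inl ⟨⟨_, h c⟩, Subtype.ext ?_⟩⟩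
      refine mul_right_cancel₀ (mul_ne_zero (hne hs) (hne hs')) ?_
      have hc := congrArg (algebraMap R (FractionRing R)) hc
      simp only [map_mul, ← hx, ← hx'] at hc
      simp only [Subring.coe_mul]
      linear_combination hc
    · refine ⟨⟨_, h σ⟩, fun hm => hσ ((hR σ).1 hm), Or.inr ⟨⟨_, h c⟩, Subtype.ext ?_⟩⟩
      refine mul_right_cancel₀ (mul_ne_zero (hne hs) (hne hs')) ?_
      have hc := congrArg (algebraMap R (FractionRing R)) hc
      simp only [map_mul, ← hx, ← hx'] at hc
      simp only [Subring.coe_mul]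
      linear_combination hc
  have hQ'0 : Q' ≠ ⊥ := by
    obtain ⟨q, hq, hq0⟩ := Submodule.exists_mem_ne_zero_of_ne_bot hQ0
    intro hbot
    have := (hR q).2 hq
    rw [hbot] at this
    have : algebraMap R (FractionRing R) q = 0 := congrArg Subtype.val this
    exact hq0 (by simpa using this)
  obtain ⟨N, hN, hle⟩ := exists_tMax_of_tPrime (hQ'v.isTPrime hQ'p hQ'0)
  exact ⟨N, hN, fun q hq => hle ((hR q).2 hq)⟩

/-- If `R_P ⊇ ⋂ R_M` over the maximal `t`-ideals `M` not containing `P`, then this intersection is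
contained in (in fact equals) `(P : P)`. -/
theorem iInter_subset_colonPP (hR : IsPVMD R) {P : Ideal R} (hP : IsTPrime R P)
    (hsub : (⋂ M ∈ {M ∈ tMax R | ¬ P ≤ M}, locSet R M) ⊆ locSet R P) :
    (⋂ M ∈ {M ∈ tMax R | ¬ P ≤ M}, locSet R M) ⊆ colonPP R P := by
  have hinj := IsFractionRing.injective R (FractionRing R)
  intro x hx
  refine mem_colonPP.2 fun p hp => ?_
  obtain ⟨r₀, s₀, hs₀, hx₀⟩ := hsub hx
  have hs₀0 : s₀ ≠ 0 := fun h => hs₀ (h ▸ P.zero_mem)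
  have hs₀' : algebraMap R (FractionRing R) s₀ ≠ 0 := by simpa using hs₀0
  -- `x p = r₀ p / s₀` lies in every `R_M`: for `P ⊆ M` because `P R_P ⊆ R_M`.
  obtain ⟨y, hy⟩ := dvd_of_forall_tMax (a := r₀ * p) hs₀0 fun M hM => by
    by_cases hPM : P ≤ M
    · obtain ⟨σ, hσ, ⟨c, hc⟩ | ⟨c, hc⟩⟩ := hR.valAt_of_mem_tMax hM s₀ p
      · exact ⟨σ, hσ, r₀ * c, by linear_combination r₀ * hc⟩
      · exact absurd ((hP.1.mem_or_mem (hc ▸ P.mul_mem_right c hp : σ * s₀ ∈ P)).resolve_left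
          fun h => hσ (hPM h)) hs₀
    · obtain ⟨r, s, hs, hrs⟩ := Set.mem_iInter₂.1 hx M ⟨hM, hPM⟩
      refine ⟨s, hs, r * p, hinj ?_⟩
      simp only [map_mul, ← hrs, ← hx₀]
      ring
  refine ⟨y, ?_, ?_⟩
  · exact (hP.1.mem_or_mem (hy ▸ P.mul_mem_left r₀ hp : s₀ * y ∈ P)).resolve_left hs₀
  · refine mul_left_cancel₀ hs₀' ?_
    rw [← map_mul, ← hy, map_mul, ← hx₀]
    ring

/-- If `R_P` contained the intersection, then already the maximal `t`-ideals of `(P : P)` not lying over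
`P` would have localizations intersecting in `(P : P)`, although some maximal `t`-ideal does lie over
`P`. -/
theorem not_subset_of_isTSharp_colonPP (hR : IsPVMD R) {P : Ideal R} (hP : IsTPrime R P)
    (hsharp : IsTSharp (colonPP R P)) :
    ¬ (⋂ M ∈ {M ∈ tMax R | ¬ P ≤ M}, locSet R M) ⊆ locSet R P := by
  intro hsub
  have h := isOverring_colonPP P
  have hT := isTLinked_colonPP hP
  obtain ⟨_, hflat⟩ := isTFlat_of_isTLinked hR h hT
  have hinter := iInter_subset_colonPP hR hP hsub
  have hTM : ∀ M : Ideal R, ¬ P ≤ M → (colonPP R P : Set (FractionRing R)) ⊆ locSet R M := by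
    intro M hPM x hx
    obtain ⟨p, hp, hpM⟩ := Set.not_subset.1 hPM
    obtain ⟨b, -, hb⟩ := mem_colonPP.1 hx p hp
    exact ⟨b, p, hpM, hb.symm⟩
  obtain ⟨N₀, hN₀, hPN₀⟩ := exists_tMax_comap_ge h hP.1 hP.2.1 (hR.valAt hP)
    (fun x hx => hsub (Set.mem_iInter₂.2 fun M hM => hTM M hM.2 hx))
  -- Dropping every maximal `t`-ideal over `P` does not change the intersection of localizations.
  refine (h.isTSharp_iff.1 hsharp)
    {N ∈ tMax (colonPP R P) | ¬ P ≤ Ideal.comap (intoOverring R _ h) N} (tMax (colonPP R P))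
    (fun N hN => hN.1) subset_rfl (fun heq => ?_) (Set.Subset.antisymm ?_ ?_)
  · exact (heq.symm ▸ hN₀ : N₀ ∈ {N ∈ tMax (colonPP R P) |
      ¬ P ≤ Ideal.comap (intoOverring R _ h) N}).2 hPN₀
  · intro x hx
    have hxT : x ∈ colonPP R P := hinter (Set.mem_iInter₂.2 fun M hM => by
      have hMp := isTPrime_of_mem_tMax hM.1
      obtain ⟨N, hN, hMN⟩ := exists_tMax_comap_ge h hMp.1 hMp.2.1 (hR.valAt hMp) (hTM M hM.2)
      obtain ⟨M', hM', hle⟩ := exists_tMax_ge_comap h hT hN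
      have heq : Ideal.comap (intoOverring R _ h) N = M :=
        le_antisymm (hle.trans (tMax_eq_of_le hM.1 hM' (hMN.trans hle)).le) hMN
      rw [← heq, ← hflat N hN]
      exact Set.mem_iInter₂.1 hx N ⟨hN, heq.symm ▸ hM.2⟩)
    exact Set.mem_iInter₂.2 fun N hN => subset_locSetSub hN.2.1 hxT
  · exact fun x hx => Set.mem_iInter₂.2 fun N hN => Set.mem_iInter₂.1 hx N hN.1

end ColonPP

/-- **Proposition (2.7).**  For a PVMD `R` the following are equivalent:
(1) for each set `Λ` of pairwise incomparable `t`-primes of `R`, `Φ(Λ)` is `v`-finite;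
(2) `Φ(Λ)` is `v`-finite for each `Λ ⊆ t-Max(R)`;
(3) each `t`-prime `P` contains a finitely generated ideal contained in no maximal
    `t`-ideal of `R` not containing `P`;
(4) for each `t`-prime `P` there is `u ∈ K` with `(R :_R u) ⊆ P` and `(R :_R u) ⊄ M` for
    each maximal `t`-ideal `M` not containing `P`;
(5) for each `t`-prime `P`, `R_P ⊉ ⋂ R_M`, `M` ranging over maximal `t`-ideals not
    containing `P`;
(6) each `t`-linked overring of `R` is a `t#`-domain;
(7) each `t`-flat overring of `R` is a `t#`-domain;
(8) `(P : P)` is a `t#`-domain for each `t`-prime `P` of `R`. -/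
theorem pvmd_tfae (R : Type*) [CommRing R] [IsDomain R] (hR : IsPVMD R) :
    List.TFAE
      [ ∀ Λ : Set (Ideal R), IncompTPrimes R Λ → PhiVFinite R Λ,
        ∀ Λ : Set (Ideal R), Λ ⊆ tMax R → PhiVFinite R Λ,
        ∀ P : Ideal R, IsTPrime R P →
          ∃ J : Ideal R, J.FG ∧ J ≤ P ∧ ∀ M ∈ tMax R, ¬ P ≤ M → ¬ J ≤ M,
        ∀ P : Ideal R, IsTPrime R P →
          ∃ u : FractionRing R, colonIdeal R u ≤ P ∧
            ∀ M ∈ tMax R, ¬ P ≤ M → ¬ colonIdeal R u ≤ M,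
        ∀ P : Ideal R, IsTPrime R P →
          ¬ (⋂ M ∈ {M ∈ tMax R | ¬ P ≤ M}, locSet R M) ⊆ locSet R P,
        ∀ T : Subring (FractionRing R), IsOverring R T → IsTLinked R T → IsTSharp ↥T,
        ∀ T : Subring (FractionRing R), IsTFlat R T → IsTSharp ↥T,
        ∀ P : Ideal R, IsTPrime R P → IsTSharp ↥(colonPP R P) ] := by
  tfae_have 1 → 2 := fun h1 Λ hΛ => h1 Λ
    ⟨fun P hP => isTPrime_of_mem_tMax (hΛ hP),
      fun P hP Q hQ hle => (tMax_eq_of_le (hΛ hP) (hΛ hQ) hle).symm⟩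
  tfae_have 2 → 3 := fg_of_phiVFinite
  tfae_have 3 → 1 := phiVFinite_of_fg hR
  tfae_have 3 → 4 := fun h3 P hP => colon_of_fg hR hP (h3 P hP)
  tfae_have 4 → 3 := fun h4 P hP => fg_of_colon hR (h4 P hP)
  tfae_have 4 ↔ 5 := forall_congr' fun P => forall_congr' fun _ => colon_iff_loc
  tfae_have 4 → 6 := fun h4 T h hT => isTSharp_of_isTLinked hR h4 h hT
  tfae_have 6 → 7 := fun h6 T hT => h6 T hT.1 (isTLinked_of_isTFlat hT)
  tfae_have 7 → 8 := fun h7 P hP =>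
    h7 _ (isTFlat_of_isTLinked hR (isOverring_colonPP P) (isTLinked_colonPP hP))
  tfae_have 8 → 5 := fun h8 P hP => not_subset_of_isTSharp_colonPP hR hP (h8 P hP)
  tfae_finish

end TSharpPaper
end
end

section
/- Let R be a v-coherent integral domain such that for each set Λ of pairwise incomparable t-primes of R, Φ(Λ) is v-finite. Then R is a t#_P-domain. -/
/-!
The idea is that a prime `P` in one of two sets `Λ₁`, `Λ₂` but not in the other is detected by
the ring `R_{Φ(Λ)}`. Let `P ∈ Λ₁ \ Λ₂`. Then `P` is `t`-comaximal with every `Q ∈ Λ₂`, hence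
`P` is contained in no `t`-prime lying over a member of `Λ₂`. Let `Λ` be the set of maximal
elements of the poset of `t`-primes that lie over a member of `Λ₂`. It consists of pairwise
incomparable `t`-primes, and `P ∈ Φ(Λ) ⊆ Φ(Λ₂)`, because every `t`-prime lies in a maximal one
(Zorn's lemma, `exists_le_maximal_isTPrime`). By hypothesis there is a `v`-finite
`J = A_v ∈ Φ(Λ)` with `J ⊆ P`; passing to `Λ` is what makes the hypothesis, which concerns
incomparable sets only, available for an arbitrary `Λ₂`.

Now `A⁻¹ = J⁻¹ ⊆ R_{Φ(Λ₂)}`, and `A⁻¹ = B_v` with `B` finitely generated by `v`-coherence. If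
`R_{Φ(Λ₂)} ⊆ R_{Φ(Λ₁)} ⊆ R_P`, then the generators of `B` have a common denominator `s ∉ P`
(`exists_common_denominator`), so `s ∈ B⁻¹ = A_v = J ⊆ P`, a contradiction.
-/

/-
Definitions following S. Gabelli, E. Houston, T. G. Lucas,
"The t#-property for integral domains".

All the star-operation notions (`v`, `t`, maximal `t`-ideals, etc.) are defined for a
commutative ring `R` via its total quotient field `FractionRing R`; in all theorems `R`
is assumed to be an integral domain, so `FractionRing R` is its quotient field `K`.
-/

noncomputable section

namespace TSharpPaper

variable (R : Type*) [CommRing R]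

variable {σ : Type*}

/-! ### The `v`- and `t`-closures of an integral ideal -/

theorem mem_vIdeal_iff {R : Type*} [CommRing R] (I : Ideal R) (a : R) :
    a ∈ vIdeal R I ↔ ∀ y ∈ (1 : Submodule R (FractionRing R)) / idealSub R I,
      algebraMap R (FractionRing R) a * y ∈ (1 : Submodule R (FractionRing R)) :=
  Submodule.mem_div_iff_forall_mul_mem

theorem le_vIdeal_s8 {R : Type*} [CommRing R] (I : Ideal R) : I ≤ vIdeal R I := by
  intro a ha
  rw [mem_vIdeal_iff]
  intro y hy
  rw [mul_comm]
  exact Submodule.mem_div_iff_forall_mul_mem.1 hy _ (Submodule.mem_map_of_mem ha)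

theorem vIdeal_le_tIdeal {R : Type*} [CommRing R] {I J : Ideal R} (hJ : J.FG) (h0 : J ≠ ⊥)
    (hJI : J ≤ I) : vIdeal R J ≤ tIdeal R I :=
  le_iSup₂_of_le J hJ (le_iSup₂_of_le h0 hJI le_rfl)

theorem tIdeal_le_iff {R : Type*} [CommRing R] {I L : Ideal R} :
    tIdeal R I ≤ L ↔ ∀ J : Ideal R, J.FG → J ≠ ⊥ → J ≤ I → vIdeal R J ≤ L := by
  simp only [tIdeal, iSup_le_iff]

theorem tIdeal_mono {R : Type*} [CommRing R] {I L : Ideal R} (h : I ≤ L) :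
    tIdeal R I ≤ tIdeal R L :=
  tIdeal_le_iff.2 fun _ hJ h0 hJI => vIdeal_le_tIdeal hJ h0 (hJI.trans h)

theorem le_tIdeal_s8 {R : Type*} [CommRing R] (I : Ideal R) : I ≤ tIdeal R I := by
  intro a ha
  by_cases h0 : a = 0
  · simp [h0]
  · exact vIdeal_le_tIdeal (J := Ideal.span {a}) (Submodule.fg_span_singleton a)
      (by simpa using h0) ((Ideal.span_singleton_le_iff_mem I).2 ha)
      (le_vIdeal_s8 _ (Ideal.mem_span_singleton_self a))

/-! ### Maximal `t`-primes -/

/-- The union of a chain of `t`-primes is a `t`-prime: a finitely generated ideal contained in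
the union is contained in a member of the chain. -/
theorem isTPrime_sSup {R : Type*} [CommRing R] {c : Set (Ideal R)}
    (hc : ∀ P ∈ c, IsTPrime R P) (hchain : IsChain (· ≤ ·) c) (hne : c.Nonempty) :
    IsTPrime R (sSup c) := by
  have hmem : ∀ x, x ∈ sSup c ↔ ∃ P ∈ c, x ∈ P := fun x =>
    Submodule.mem_sSup_of_directed hne hchain.directedOn
  refine ⟨⟨?_, fun {x y} hxy => ?_⟩, ?_, ?_⟩
  · rw [Ne, Ideal.eq_top_iff_one, hmem]
    rintro ⟨P, hP, h1⟩
    exact (hc P hP).1.one_notMem h1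
  · obtain ⟨P, hP, hxyP⟩ := (hmem _).1 hxy
    exact ((hc P hP).1.mem_or_mem hxyP).imp (fun h => (hmem x).2 ⟨P, hP, h⟩)
      fun h => (hmem y).2 ⟨P, hP, h⟩
  · obtain ⟨P, hP⟩ := hne
    intro h0
    exact (hc P hP).2.1 (le_bot_iff.1 (h0 ▸ le_sSup hP))
  · refine le_antisymm (tIdeal_le_iff.2 fun J hJ h0 hJc => ?_) (le_tIdeal_s8 _)
    obtain ⟨P, hP, hJP⟩ :=
      (CompleteLattice.isCompactElement_iff_le_of_directed_sSup_le _ J).1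
        ((Submodule.fg_iff_compact J).1 hJ) c hne hchain.directedOn hJc
    exact (vIdeal_le_tIdeal hJ h0 hJP).trans ((hc P hP).2.2.le.trans (le_sSup hP))

theorem exists_le_maximal_isTPrime {R : Type*} [CommRing R] {Q : Ideal R} (hQ : IsTPrime R Q) :
    ∃ M, Q ≤ M ∧ Maximal (IsTPrime R) M :=
  zorn_le_nonempty₀ {P : Ideal R | IsTPrime R P}
    (fun c hc hchain P hP =>
      ⟨sSup c, isTPrime_sSup hc hchain ⟨P, hP⟩, fun _ h => le_sSup h⟩) Q hQ

/-! ### `v`-coherence and denominators -/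

/-- A finitely generated submodule of the quotient field, each of whose elements has a
denominator outside the prime `P`, has a common denominator outside `P`. -/
theorem exists_common_denominator_s8 {R : Type*} [CommRing R] {P : Ideal R} (hP : P.IsPrime)
    {B : Submodule R (FractionRing R)} (hB : B.FG)
    (h : ∀ b ∈ B, ∃ s ∉ P, b * algebraMap R (FractionRing R) s ∈ imageR R) :
    ∃ s ∉ P, algebraMap R (FractionRing R) s ∈ (1 : Submodule R (FractionRing R)) / B := by
  classical
  obtain ⟨S, rfl⟩ := hB
  have key : ∀ T : Finset (FractionRing R), T ⊆ S →
      ∃ s ∉ P, ∀ b ∈ T, b * algebraMap R (FractionRing R) s ∈ imageR R := by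
    intro T
    induction T using Finset.induction_on with
    | empty => exact fun _ => ⟨1, hP.one_notMem, by simp⟩
    | insert b T _ ih =>
      intro hT
      obtain ⟨s, hs, hsT⟩ := ih fun x hx => hT (Finset.mem_insert_of_mem hx)
      obtain ⟨u, hu, r, hr⟩ := h b (Submodule.subset_span (hT (Finset.mem_insert_self b T)))
      refine ⟨s * u, fun hm => (hP.mem_or_mem hm).elim hs hu, fun x hx => ?_⟩
      rcases Finset.mem_insert.1 hx with rfl | hx
      · exact ⟨r * s, by rw [map_mul, map_mul, hr]; ring⟩
      · obtain ⟨q, hq⟩ := hsT x hx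
        exact ⟨q * u, by rw [map_mul, map_mul, hq]; ring⟩
  obtain ⟨s, hs, hsS⟩ := key S subset_rfl
  refine ⟨s, hs, Submodule.mem_div_iff_forall_mul_mem.2 fun y hy => ?_⟩
  induction hy using Submodule.span_induction with
  | mem b hb =>
    rw [mul_comm]
    exact Submodule.mem_one.2 (hsS b hb)
  | zero => simp
  | add x y _ _ hx hy => rw [mul_add]; exact add_mem hx hy
  | smul r x _ hx => rw [mul_smul_comm]; exact Submodule.smul_mem _ r hx

/-- For a finitely generated ideal `A` with `A⁻¹ ⊆ R_P`, `v`-coherence gives `A_v ⊄ P`. -/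
theorem not_vIdeal_le {R : Type*} [CommRing R] (hvc : IsVCoherent R) {P A : Ideal R}
    (hP : P.IsPrime) (hA : A.FG) (h0 : A ≠ ⊥)
    (h : ∀ x ∈ (1 : Submodule R (FractionRing R)) / idealSub R A,
      ∃ s ∉ P, x * algebraMap R (FractionRing R) s ∈ imageR R) :
    ¬ vIdeal R A ≤ P := by
  intro hle
  obtain ⟨B, hB, hAB⟩ := hvc A h0 hA
  have hB_le : B ≤ 1 / idealSub R A := by
    rw [hAB]
    intro b hb
    refine Submodule.mem_div_iff_forall_mul_mem.2 fun y hy => ?_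
    rw [mul_comm]
    exact Submodule.mem_div_iff_forall_mul_mem.1 hy b hb
  obtain ⟨s, hs, hsB⟩ := exists_common_denominator_s8 hP hB fun b hb => h b (hB_le hb)
  refine hs (hle ((mem_vIdeal_iff A s).2 fun y hy => ?_))
  rw [hAB] at hy
  rw [mul_comm]
  exact Submodule.mem_div_iff_forall_mul_mem.1 hy _ hsB

/-- Since `0⁻¹ = K`, every nonzero element of `0_v` is a unit; thus `0_v` is `R` if `R` is a
field and zero otherwise, and it vanishes as soon as it lies in a prime ideal. -/
theorem vIdeal_bot_eq_bot_of_le {R : Type*} [CommRing R] [IsDomain R] {P : Ideal R}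
    (hP : P.IsPrime) (hle : vIdeal R ⊥ ≤ P) : vIdeal R (⊥ : Ideal R) = ⊥ := by
  rw [eq_bot_iff]
  intro s hs
  by_contra h0
  have hs0 : algebraMap R (FractionRing R) s ≠ 0 := by
    simpa using h0
  -- `s⁻¹ = s * s⁻²` lies in `R`, as `s K ⊆ R`
  have hmem := (mem_vIdeal_iff ⊥ s).1 hs
    ((algebraMap R (FractionRing R) s)⁻¹ * (algebraMap R (FractionRing R) s)⁻¹)
    (Submodule.mem_div_iff_forall_mul_mem.2 (by simp [idealSub]))
  obtain ⟨r, hr⟩ := Submodule.mem_one.1 hmem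
  rw [mul_inv_cancel_left₀ hs0] at hr
  have hsr : s * r = 1 := by
    apply IsFractionRing.injective R (FractionRing R)
    rw [map_mul, hr, map_one, mul_inv_cancel₀ hs0]
  exact hP.one_notMem (hsr ▸ P.mul_mem_right r (hle hs))

/-! ### Comparison of the rings `R_{Φ(Λ)}` -/

/-- The asymmetric half of the `t#_P` property: a member of `Λ₁` which is `t`-comaximal with all
members of `Λ₂` prevents the inclusion `R_{Φ(Λ₂)} ⊆ R_{Φ(Λ₁)}`. -/
theorem not_rPhi_subset {R : Type*} [CommRing R] [IsDomain R] (hvc : IsVCoherent R)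
    (h : ∀ Λ : Set (Ideal R), IncompTPrimes R Λ → PhiVFinite R Λ)
    {Λ₁ Λ₂ : Set (Ideal R)} (h₂ : ∀ Q ∈ Λ₂, IsTPrime R Q) {P : Ideal R}
    (hP : IsTPrime R P) (hP₁ : P ∈ Λ₁) (hcomax : ∀ Q ∈ Λ₂, tIdeal R (P ⊔ Q) = ⊤) :
    ¬ RPhi R Λ₂ ⊆ RPhi R Λ₁ := by
  intro hsub
  let Λ : Set (Ideal R) := {M | Maximal (IsTPrime R) M ∧ ∃ Q ∈ Λ₂, Q ≤ M}
  have hinc : IncompTPrimes R Λ :=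
    ⟨fun M hM => hM.1.prop, fun M hM N hN hMN => hM.1.eq_of_le hN.1.prop hMN⟩
  have hPΛ : P ∈ Phi R Λ := by
    refine ⟨hP.2, fun M hM hPM => ?_⟩
    obtain ⟨hmax, Q, hQ, hQM⟩ := hM
    have htop := tIdeal_mono (sup_le hPM hQM)
    rw [hcomax Q hQ, hmax.prop.2.2] at htop
    exact hmax.prop.1.ne_top (top_le_iff.1 htop)
  obtain ⟨J, ⟨hJt, hJΛ⟩, hJP, A, hA, rfl⟩ := h Λ hinc P hPΛ
  have hJ₂ : vIdeal R A ∈ Phi R Λ₂ := by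
    refine ⟨hJt, fun Q hQ hle => ?_⟩
    obtain ⟨M, hQM, hM⟩ := exists_le_maximal_isTPrime (h₂ Q hQ)
    exact hJΛ M ⟨hM, Q, hQ, hQM⟩ (hle.trans hQM)
  have hA0 : A ≠ ⊥ := by
    rintro rfl
    exact hJt.1 (vIdeal_bot_eq_bot_of_le hP.1 hJP)
  refine not_vIdeal_le hvc hP.1 hA hA0 (fun x hx => ?_) hJP
  have hx₂ : x ∈ RPhi R Λ₂ := by
    refine ⟨_, hJ₂, fun a ha => ?_⟩
    rw [mul_comm]
    exact Submodule.mem_one.1 ((mem_vIdeal_iff A a).1 ha x hx)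
  obtain ⟨I, ⟨-, hI⟩, hxI⟩ := hsub hx₂
  obtain ⟨s, hsI, hsP⟩ := SetLike.not_le_iff_exists.1 (hI P hP₁)
  exact ⟨s, hsP, hxI s hsI⟩

/-- **Proposition (2.10).**  Let `R` be a `v`-coherent integral domain such that `Φ(Λ)` is
`v`-finite for every set `Λ` of pairwise incomparable `t`-primes of `R`.  Then `R` is a
`t#_P`-domain. -/
theorem tSharpP_of_phi_vFinite (R : Type*) [CommRing R] [IsDomain R]
    (hvc : IsVCoherent R)
    (h : ∀ Λ : Set (Ideal R), IncompTPrimes R Λ → PhiVFinite R Λ) :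
    IsTSharpP R := by
  intro Λ₁ Λ₂ h₁ h₂ hcomax hne heq
  apply hne
  ext P
  constructor
  · intro hP
    by_contra hP₂
    exact not_rPhi_subset hvc h h₂ (h₁ P hP) hP
      (fun Q hQ => hcomax P hP Q hQ fun e => hP₂ (e ▸ hQ)) heq.ge
  · intro hP
    by_contra hP₁
    exact not_rPhi_subset hvc h h₁ (h₂ P hP) hP
      (fun Q hQ => sup_comm Q P ▸ hcomax Q hQ P hP fun e => hP₁ (e ▸ hQ)) heq.le

end TSharpPaper
end
end
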